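/- arXiv:1901.05396 — 15 statements merged into one kernel-verified Lean document; each statement's English description precedes it below -/
import Mathlib

section
/- Let (X,d) be a metric space. Then U(X) is a ring if and only if every subset of X that is not Bourbaki bounded in X contains an infinite uniformly isolated subset. -/
/-- `U(X)` is a ring: the pointwise product of any two uniformly continuous
real-valued functions on `X` is uniformly continuous. -/
def IsRingUC (X : Type*) [MetricSpace X] : Prop :=
  ∀ f g : X → ℝ, UniformContinuous f → UniformContinuous g →
    UniformContinuous (fun x => f x * g x)

/-- `A` is Bourbaki bounded in `X`: every uniformly continuous real-valued
function on `X` is bounded on `A`. -/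
def BourbakiBounded {X : Type*} [MetricSpace X] (A : Set X) : Prop :=
  ∀ f : X → ℝ, UniformContinuous f → ∃ M : ℝ, ∀ x ∈ A, |f x| ≤ M

/-- `A` is uniformly isolated: there is `ε > 0` such that `B(x,ε) = {x}` for all `x ∈ A`. -/
def UnifIsolated {X : Type*} [MetricSpace X] (A : Set X) : Prop :=
  ∃ ε > (0 : ℝ), ∀ x ∈ A, Metric.ball x ε = {x}

theorem aux_mpr {X : Type*} [MetricSpace X]
    (H : ∀ A : Set X, ¬ BourbakiBounded A → ∃ B ⊆ A, B.Infinite ∧ UnifIsolated B) :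
    IsRingUC X := by
  intro f g hf hg
  by_contra hn
  rw [Metric.uniformContinuous_iff] at hn
  push Not at hn
  obtain ⟨ε, hε, hn⟩ := hn
  choose x y hxy hfg using fun n : ℕ => hn (1 / ((n : ℝ) + 1)) (by positivity)
  have hA : ¬ BourbakiBounded (Set.range x) := by
    intro hb
    obtain ⟨M, hM⟩ := hb f hf
    obtain ⟨N, hN⟩ := hb g hg
    have hM0 : 0 ≤ M := (abs_nonneg _).trans (hM (x 0) ⟨0, rfl⟩)
    have hN0 : 0 ≤ N := (abs_nonneg _).trans (hN (x 0) ⟨0, rfl⟩)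
    set K := M + N + 2 with hK
    have hKpos : 0 < K := by positivity
    obtain ⟨a, ha, hfa⟩ := Metric.uniformContinuous_iff.1 hf (min 1 (ε / (2 * K))) (by positivity)
    obtain ⟨b, hb', hgb⟩ := Metric.uniformContinuous_iff.1 hg (min 1 (ε / (2 * K))) (by positivity)
    obtain ⟨n, hn⟩ := exists_nat_one_div_lt (lt_min ha hb')
    have h1 := hfa ((hxy n).trans (hn.trans_le (min_le_left _ _)))
    have h2 := hgb ((hxy n).trans (hn.trans_le (min_le_right _ _)))
    have h3 := hfg n
    have h4 := hM (x n) ⟨n, rfl⟩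
    have h5 := hN (x n) ⟨n, rfl⟩
    rw [Real.dist_eq] at h1 h2 h3
    rw [lt_min_iff] at h1 h2
    have h6 : |g (y n)| ≤ K := by
      have := abs_sub_abs_le_abs_sub (g (y n)) (g (x n))
      rw [abs_sub_comm] at this
      linarith [h2.1]
    have h7 : |f (x n)| ≤ K := by linarith
    have h8 : f (x n) * g (x n) - f (y n) * g (y n) =
      f (x n) * (g (x n) - g (y n)) + g (y n) * (f (x n) - f (y n)) := by ring
    have h9 := abs_add_le (f (x n) * (g (x n) - g (y n))) (g (y n) * (f (x n) - f (y n)))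
    rw [← h8, abs_mul, abs_mul] at h9
    have h10 : |f (x n)| * |g (x n) - g (y n)| ≤ K * |g (x n) - g (y n)| := by gcongr
    have h11 : |g (y n)| * |f (x n) - f (y n)| ≤ K * |f (x n) - f (y n)| := by gcongr
    have h12 : K * |g (x n) - g (y n)| < K * (ε / (2 * K)) := by gcongr; exact h2.2
    have h13 : K * |f (x n) - f (y n)| < K * (ε / (2 * K)) := by gcongr; exact h1.2
    have h14 : K * (ε / (2 * K)) = ε / 2 := by field_simp
    linarith
  obtain ⟨B, hBA, hBi, δ, hδ, hB⟩ := H _ hA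
  obtain ⟨N, hN⟩ := exists_nat_one_div_lt hδ
  apply hBi
  apply ((Set.finite_lt_nat N).image x).subset
  intro z hz
  obtain ⟨n, rfl⟩ := hBA hz
  refine ⟨n, ?_, rfl⟩
  by_contra hnN
  have hnN : N ≤ n := not_lt.1 hnN
  have hy : y n ∈ Metric.ball (x n) δ := by
    rw [Metric.mem_ball, dist_comm]
    refine (hxy n).trans (lt_of_le_of_lt ?_ hN)
    gcongr
  rw [hB _ hz] at hy
  have hy : y n = x n := hy
  have := hfg n
  rw [hy, dist_self] at this
  linarith

theorem aux_mp {X : Type*} [MetricSpace X] (H : IsRingUC X) (A : Set X)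
    (hA : ¬ BourbakiBounded A) : ∃ B ⊆ A, B.Infinite ∧ UnifIsolated B := by
  by_contra hcon
  push Not at hcon
  unfold BourbakiBounded at hA
  push Not at hA
  obtain ⟨f, hf, hfA⟩ := hA
  obtain ⟨η, hη, hfη⟩ := Metric.uniformContinuous_iff.1 hf 1 one_pos
  have key : ∀ (n : ℕ) (M : ℝ), ∃ p : X × X, M < |f p.1| ∧ p.2 ≠ p.1 ∧
      dist p.2 p.1 < min η (1 / ((n : ℝ) + 1)) := by
    intro n M
    set e := min η (1 / ((n : ℝ) + 1)) with he
    have hepos : 0 < e := by positivity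
    have hfin : {x ∈ A | Metric.ball x e = {x}}.Finite := by
      by_contra hinf
      exact hcon _ (Set.sep_subset _ _) hinf ⟨e, hepos, fun x hx => hx.2⟩
    obtain ⟨C, hC⟩ := (hfin.image (fun x => |f x|)).bddAbove
    obtain ⟨x, hxA, hx⟩ := hfA (max M C)
    have hne : Metric.ball x e ≠ {x} := by
      intro h
      have := hC ⟨x, ⟨hxA, h⟩, rfl⟩
      exact absurd ((le_max_right M C).trans_lt hx) (not_lt.2 this)
    have : ∃ y, y ≠ x ∧ dist y x < e := by
      by_contra h
      push Not at h
      apply hne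
      ext y
      simp only [Metric.mem_ball, Set.mem_singleton_iff]
      constructor
      · intro hy
        by_contra h'
        exact absurd hy (not_lt.2 (h y h'))
      · rintro rfl
        simpa using hepos
    obtain ⟨y, hy1, hy2⟩ := this
    exact ⟨(x, y), (le_max_left M C).trans_lt hx, hy1, hy2⟩
  choose P hP1 hP2 hP3 using key
  obtain ⟨q, hq0, hqs⟩ : ∃ q : ℕ → X × X, q 0 = P 0 3 ∧
      ∀ n, q (n + 1) = P (n + 1) (2 * |f (q n).1| + 3) :=
    ⟨fun n => Nat.rec (P 0 3) (fun n r => P (n + 1) (2 * |f r.1| + 3)) n, rfl, fun n => rfl⟩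
  have hq : ∀ n, (q n).2 ≠ (q n).1 ∧ dist (q n).2 (q n).1 < min η (1 / ((n : ℝ) + 1)) := by
    intro n
    cases n with
    | zero => rw [hq0]; exact ⟨hP2 _ _, hP3 _ _⟩
    | succ n => rw [hqs]; exact ⟨hP2 _ _, hP3 _ _⟩
  set x : ℕ → X := fun n => (q n).1 with hx
  set y : ℕ → X := fun n => (q n).2 with hy
  have hu0 : 3 < |f (x 0)| := by simp only [hx, hq0]; exact hP1 _ _
  have hus : ∀ n, 2 * |f (x n)| + 3 < |f (x (n + 1))| := by
    intro n; simp only [hx]; rw [hqs]; exact hP1 _ _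
  have hpow : ∀ n, (2 : ℝ) ^ n ≤ |f (x n)| := by
    intro n
    induction n with
    | zero => simp; linarith
    | succ n ih => rw [pow_succ]; linarith [hus n]
  have hpos : ∀ n, 0 < |f (x n)| := fun n => lt_of_lt_of_le (by positivity) (hpow n)
  have hmono : Monotone (fun n => |f (x n)|) :=
    monotone_nat_of_le_succ fun n => by linarith [hus n, hpos n]
  have hsep : ∀ m n, m < n → |f (x m)| + 3 ≤ |f (x n)| := by
    intro m n h
    have : |f (x (m + 1))| ≤ |f (x n)| := hmono h
    linarith [hus m, hpos m]
  have hδ : ∀ n, 0 < dist (y n) (x n) := fun n => dist_pos.2 (hq n).1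
  have hδη : ∀ n, dist (y n) (x n) < η := fun n => (hq n).2.trans_le (min_le_left _ _)
  have hfar : ∀ m n (z : X), m ≠ n → dist z (x n) < η → dist (y m) (x m) ≤ dist z (x m) := by
    intro m n z hmn hz
    by_contra hlt
    have h1 := hfη ((not_le.1 hlt).trans (hδη m))
    have h2 := hfη hz
    rw [Real.dist_eq] at h1 h2
    have h3 := abs_abs_sub_abs_le (f z) (f (x m))
    have h4 := abs_abs_sub_abs_le (f z) (f (x n))
    have h5 := abs_le.1 h3
    have h6 := abs_le.1 h4
    rcases lt_or_gt_of_ne hmn with h | h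
    · linarith [hsep _ _ h]
    · linarith [hsep _ _ h]
  set b : ℕ → X → ℝ := fun n z => |f (x n)|⁻¹ * max 0 (1 - dist z (x n) / dist (y n) (x n)) with hb
  have hbuc : ∀ n, UniformContinuous (b n) := by
    intro n
    have h1 : LipschitzWith 1 (fun z => dist z (x n)) := LipschitzWith.dist_left (x n)
    have h2 : LipschitzWith ‖|f (x n)|⁻¹‖₊ (fun t : ℝ => |f (x n)|⁻¹ * t) :=
      lipschitzWith_smul (|f (x n)|⁻¹)
    have h3 : LipschitzWith ‖(dist (y n) (x n))⁻¹‖₊ (fun t : ℝ => (dist (y n) (x n))⁻¹ * t) :=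
      lipschitzWith_smul ((dist (y n) (x n))⁻¹)
    have h4 : UniformContinuous (fun z => 1 - dist z (x n) / dist (y n) (x n)) := by
      have := (uniformContinuous_const (b := (1:ℝ))).sub
        (h3.uniformContinuous.comp h1.uniformContinuous)
      refine this.congr ?_ <;> simp [div_eq_inv_mul]
    have h5 : UniformContinuous (fun t : ℝ => max 0 t) :=
      (LipschitzWith.id.const_max 0).uniformContinuous
    exact h2.uniformContinuous.comp (h5.comp h4)
  have hbound : ∀ n z, ‖b n z‖ ≤ (1 / 2 : ℝ) ^ n := by
    intro n z
    have h0 : 0 ≤ dist z (x n) / dist (y n) (x n) := by positivity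
    have h1 : max 0 (1 - dist z (x n) / dist (y n) (x n)) ≤ 1 := max_le zero_le_one (by linarith)
    have h2 : |f (x n)|⁻¹ ≤ (1 / 2 : ℝ) ^ n := by
      rw [one_div, inv_pow]
      exact inv_anti₀ (by positivity) (hpow n)
    rw [Real.norm_of_nonneg (by simp only [hb]; positivity)]
    calc _ ≤ (1 / 2 : ℝ) ^ n * 1 := by simp only [hb]; gcongr
      _ = _ := mul_one _
  have huc : UniformContinuous (fun z => ∑' n, b n z) := by
    have ht := tendstoUniformly_tsum summable_geometric_two hbound
    refine ht.uniformContinuous (Filter.Eventually.frequently (Filter.Eventually.of_forall ?_))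
    intro s
    classical
    induction s using Finset.induction_on with
    | empty => simpa using uniformContinuous_const
    | insert a s ha ih =>
      simp only [Finset.sum_insert ha]
      exact (hbuc a).add ih
  have hzero : ∀ m z, dist (y m) (x m) ≤ dist z (x m) → b m z = 0 := by
    intro m z h
    have : 1 ≤ dist z (x m) / dist (y m) (x m) := (one_le_div (hδ m)).2 h
    simp only [hb]
    rw [max_eq_left (by linarith), mul_zero]
  have hhx : ∀ n, ∑' m, b m (x n) = |f (x n)|⁻¹ := by
    intro n
    rw [tsum_eq_single n]
    · simp [hb]
    · intro m hm
      exact hzero _ _ (hfar m n _ hm (by simpa using hη))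
  have hhy : ∀ n, ∑' m, b m (y n) = 0 := by
    intro n
    have : ∀ m, b m (y n) = 0 := by
      intro m
      by_cases h : m = n
      · subst h; exact hzero _ _ le_rfl
      · exact hzero _ _ (hfar m n _ h (hδη n))
    simp [this]
  obtain ⟨δ, hδ0, hprod⟩ := Metric.uniformContinuous_iff.1 (H _ _ hf huc) 1 one_pos
  obtain ⟨n, hn⟩ := exists_nat_one_div_lt hδ0
  have h1 := hprod (((hq n).2.trans_le (min_le_right _ _)).trans hn)
  change dist (f (y n) * ∑' m, b m (y n)) (f (x n) * ∑' m, b m (x n)) < 1 at h1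
  rw [hhx, hhy, Real.dist_eq, mul_zero, zero_sub, abs_neg, abs_mul, abs_inv, abs_abs,
    mul_inv_cancel₀ (hpos n).ne'] at h1
  exact lt_irrefl _ h1

theorem stmt0 {X : Type*} [MetricSpace X] :
    IsRingUC X ↔
      ∀ A : Set X, ¬ BourbakiBounded A →
        ∃ B ⊆ A, B.Infinite ∧ UnifIsolated B :=
  ⟨aux_mp, aux_mpr⟩
end

section
/- Let (X,d) be a metric space. Then U(X) is a ring if and only if for every uniformly continuous function f : X → ℝ there exists k ≥ 0 such that the set {x ∈ X : |f(x)| ≥ k} is uniformly isolated. -/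
theorem aux_ring_of {X : Type*} [MetricSpace X]
    (h : ∀ f : X → ℝ, UniformContinuous f →
        ∃ k : ℝ, 0 ≤ k ∧ UnifIsolated {x : X | k ≤ |f x|}) : IsRingUC X := by
  intro f g hf hg
  obtain ⟨k, hk, ε, hε, hA⟩ := h (fun x => |f x| + |g x|)
    ((Real.uniformContinuous_abs.comp hf).add (Real.uniformContinuous_abs.comp hg))
  rw [Metric.uniformContinuous_iff] at hf hg ⊢
  intro e he
  obtain ⟨d1, hd1, h1⟩ := hf (e / (2 * (k + 1))) (by positivity)
  obtain ⟨d2, hd2, h2⟩ := hg (e / (2 * (k + 1))) (by positivity)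
  refine ⟨min ε (min d1 d2), by positivity, fun {a b} hab => ?_⟩
  have hab0 : dist a b < ε := lt_of_lt_of_le hab (min_le_left _ _)
  have hab1 : dist a b < d1 := lt_of_lt_of_le hab ((min_le_right _ _).trans (min_le_left _ _))
  have hab2 : dist a b < d2 := lt_of_lt_of_le hab ((min_le_right _ _).trans (min_le_right _ _))
  by_cases hne : a = b
  · subst hne; simpa using he
  have ha : |f a| + |g a| < k := by
    by_contra hc
    have hb : b ∈ Metric.ball a ε := by rwa [Metric.mem_ball, dist_comm]
    rw [hA a (by simpa [abs_of_nonneg (add_nonneg (abs_nonneg (f a)) (abs_nonneg (g a)))] using hc)] at hb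
    exact hne hb.symm
  have hb : |f b| + |g b| < k := by
    by_contra hc
    have hb : a ∈ Metric.ball b ε := by rwa [Metric.mem_ball]
    rw [hA b (by simpa [abs_of_nonneg (add_nonneg (abs_nonneg (f b)) (abs_nonneg (g b)))] using hc)] at hb
    exact hne hb
  have e1 := h1 hab1
  have e2 := h2 hab2
  rw [Real.dist_eq] at e1 e2 ⊢
  set η := e / (2 * (k + 1)) with hη
  have hηp : 0 < η := by positivity
  have hee : e = 2 * η * (k + 1) := by rw [hη]; field_simp
  have : f a * g a - f b * g b = f a * (g a - g b) + (f a - f b) * g b := by ring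
  rw [this]
  have t1 : |f a * (g a - g b)| ≤ k * η := by
    rw [abs_mul]
    exact mul_le_mul (by linarith [abs_nonneg (g a)]) e2.le (abs_nonneg _) hk
  have t2 : |(f a - f b) * g b| ≤ η * k := by
    rw [abs_mul]
    exact mul_le_mul e1.le (by linarith [abs_nonneg (f b)]) (abs_nonneg _) hηp.le
  have := abs_add_le (f a * (g a - g b)) ((f a - f b) * g b)
  nlinarith

theorem aux_bump {X : Type*} [MetricSpace X] (x0 : X) (c r : ℝ) :
    UniformContinuous (fun x => c * max 0 (1 - dist x x0 / r)) := by
  have h1 : UniformContinuous (fun x : X => r⁻¹ * dist x x0) :=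
    (uniformContinuous_id.dist uniformContinuous_const).const_mul' r⁻¹
  have h2 : UniformContinuous (fun x : X => 1 - r⁻¹ * dist x x0) := uniformContinuous_const.sub h1
  have h3 : UniformContinuous (fun t : ℝ => max 0 t) :=
    (LipschitzWith.id.const_max 0).uniformContinuous
  have h4 := (h3.comp h2).const_mul' c
  refine h4.congr ?_
  intro x
  simp [div_eq_inv_mul]

theorem aux_main {X : Type*} [MetricSpace X] (hR : IsRingUC X) (f : X → ℝ)
    (hf : UniformContinuous f)
    (hbad : ∀ k : ℝ, 0 ≤ k → ∀ ε > 0, ∃ x y : X, k ≤ f x ∧ x ≠ y ∧ dist x y < ε) : False := by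
  obtain ⟨δ, hδ, hfδ⟩ := Metric.uniformContinuous_iff.1 hf 1 one_pos
  have hb2 : ∀ k : ℝ, ∃ x y : X, k ≤ f x ∧ x ≠ y ∧ dist x y < min δ (1 / (|k| + 1)) := by
    intro k
    obtain ⟨x, y, h1, h2, h3⟩ := hbad |k| (abs_nonneg k) (min δ (1 / (|k| + 1))) (by positivity)
    exact ⟨x, y, (le_abs_self k).trans h1, h2, h3⟩
  choose P Q hP hPQ hd using hb2
  let K : ℕ → ℝ := fun n => Nat.rec 1 (fun _ k => 2 * f (P k) + 3) n
  have hKs : ∀ n, K (n + 1) = 2 * f (P (K n)) + 3 := fun n => rfl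
  have hK2 : ∀ n, (2 : ℝ) ^ n ≤ K n := by
    intro n
    induction n with
    | zero => simp [K]
    | succ n ih => rw [hKs, pow_succ]; linarith [hP (K n)]
  have hK0 : ∀ n, 0 < K n := fun n => lt_of_lt_of_le (by positivity) (hK2 n)
  have hF : ∀ n, 0 < f (P (K n)) := fun n => (hK0 n).trans_le (hP _)
  have hstep : ∀ n, f (P (K n)) + 3 ≤ f (P (K (n + 1))) := by
    intro n
    have := hP (K (n + 1))
    rw [hKs] at this
    have := hF n
    rw [hKs]; linarith
  have hmono : Monotone (fun n => f (P (K n))) :=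
    monotone_nat_of_le_succ (fun n => by linarith [hstep n])
  have hlt : ∀ m n, m < n → f (P (K m)) + 3 ≤ f (P (K n)) := fun m n hmn =>
    (hstep m).trans (hmono hmn)
  have hsep : ∀ m n, |f (P (K m)) - f (P (K n))| < 2 → m = n := by
    intro m n h
    rw [abs_lt] at h
    rcases lt_trichotomy m n with h' | h' | h'
    · linarith [hlt _ _ h']
    · exact h'
    · linarith [hlt _ _ h']
  set x : ℕ → X := fun n => P (K n) with hx
  set y : ℕ → X := fun n => Q (K n) with hy
  set r : ℕ → ℝ := fun n => dist (x n) (y n) with hr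
  have hr0 : ∀ n, 0 < r n := fun n => dist_pos.2 (hPQ _)
  have hrδ : ∀ n, r n < δ := fun n => (hd _).trans_le (min_le_left _ _)
  have hrK : ∀ n, r n < 1 / (K n + 1) := fun n => by
    have := (hd (K n)).trans_le (min_le_right _ _)
    rwa [abs_of_pos (hK0 n)] at this
  let b : ℕ → X → ℝ := fun n z => (f (x n))⁻¹ * max 0 (1 - dist z (x n) / r n)
  have hbn : ∀ n z, ‖b n z‖ ≤ (1 / 2 : ℝ) ^ n := by
    intro n z
    have h1 : (f (x n))⁻¹ ≤ (1 / 2 : ℝ) ^ n := by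
      rw [one_div, inv_pow]
      exact inv_anti₀ (by positivity) ((hK2 n).trans (hP _))
    have h2 : max 0 (1 - dist z (x n) / r n) ≤ 1 := by
      have : 0 ≤ dist z (x n) / r n := div_nonneg dist_nonneg (hr0 n).le
      exact max_le zero_le_one (by linarith)
    have h3 : 0 ≤ (f (x n))⁻¹ := inv_nonneg.2 (hF n).le
    rw [Real.norm_of_nonneg (mul_nonneg h3 (le_max_left _ _))]
    calc _ ≤ (1 / 2 : ℝ) ^ n * 1 := mul_le_mul h1 h2 (le_max_left _ _) (by positivity)
      _ = _ := mul_one _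
  have hbz : ∀ n z, r n ≤ dist z (x n) → b n z = 0 := by
    intro n z h
    have : 1 ≤ dist z (x n) / r n := (one_le_div (hr0 n)).2 h
    simp only [b]
    rw [max_eq_left (by linarith), mul_zero]
  have hg : UniformContinuous (fun z => ∑' n, b n z) := by
    have ht := tendstoUniformly_tsum_nat (summable_geometric_two) hbn
    refine ht.uniformContinuous (Filter.Frequently.of_forall fun N => ?_)
    induction N with
    | zero => simpa using uniformContinuous_const
    | succ N ih =>
      simp only [Finset.sum_range_succ]
      exact ih.add (aux_bump _ _ _)
  have hgx : ∀ n, f (x n) * ∑' m, b m (x n) = 1 := by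
    intro n
    rw [tsum_eq_single n]
    · have h0 : f (x n) ≠ 0 := (hF n).ne'
      simp [b, h0]
    · intro m hm
      apply hbz
      by_contra hc
      have := hfδ ((not_le.1 hc).trans (hrδ m))
      rw [Real.dist_eq] at this
      exact hm (hsep n m (by linarith)).symm
  have hgy : ∀ n, f (y n) * ∑' m, b m (y n) = 0 := by
    intro n
    have : ∀ m, b m (y n) = 0 := by
      intro m
      apply hbz
      by_contra hc
      have h1 := hfδ ((not_le.1 hc).trans (hrδ m))
      have h2 := hfδ (hrδ n)
      rw [Real.dist_eq] at h1 h2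
      have : n = m := hsep n m (by
        have := abs_sub_le (f (x n)) (f (y n)) (f (x m))
        exact this.trans_lt (by linarith))
      subst this
      exact hc (by rw [dist_comm])
    simp [this]
  obtain ⟨η, hη, hη2⟩ := Metric.uniformContinuous_iff.1 (hR _ _ hf hg) 1 one_pos
  obtain ⟨n, hn⟩ := pow_unbounded_of_one_lt (1 / η) (one_lt_two)
  have h1 : r n < η := by
    refine (hrK n).trans ?_
    rw [one_div_lt (by linarith [hK0 n]) hη]
    linarith [hK2 n]
  have := hη2 h1
  rw [hgx, hgy] at this
  norm_num at this

theorem stmt1 {X : Type*} [MetricSpace X] :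
    IsRingUC X ↔
      ∀ f : X → ℝ, UniformContinuous f →
        ∃ k : ℝ, 0 ≤ k ∧ UnifIsolated {x : X | k ≤ |f x|} := by
  refine ⟨fun hR f hf => ?_, aux_ring_of⟩
  by_contra hc
  refine aux_main hR (fun x => |f x|) (Real.uniformContinuous_abs.comp hf) ?_
  intro k hk ε hε
  by_contra hc2
  refine hc ⟨k, hk, ε, hε, fun x hx => ?_⟩
  ext z
  simp only [Metric.mem_ball, Set.mem_singleton_iff]
  constructor
  · intro hz
    by_contra hne
    exact hc2 ⟨x, z, hx, fun h => hne h.symm, by rwa [dist_comm]⟩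
  · rintro rfl
    simpa using hε
end

section
/- Let (X,d) be a metric space. Then U(X) is a ring if and only if X is ℝ-fine, that is, for every uniformly continuous function f : X → ℝ and every continuous function g : ℝ → ℝ, the composition g ∘ f is uniformly continuous. -/
theorem aux_isolated {X : Type*} [MetricSpace X] (h : IsRingUC X) (F : X → ℝ)
    (hF : UniformContinuous F) :
    ∃ M : ℝ, ∃ δ : ℝ, 0 < δ ∧ ∀ x y : X, M < F x → dist x y < δ → x = y := by
  by_contra hcon
  push Not at hcon
  obtain ⟨δ0, hδ0, hFδ⟩ := Metric.uniformContinuous_iff.1 hF 1 one_pos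
  have hsel : ∀ (M : ℝ) (n : ℕ), ∃ x y : X, M < F x ∧ dist x y < min δ0 (1 / ((n : ℝ) + 1)) ∧
      x ≠ y := by
    intro M n
    exact hcon M _ (lt_min hδ0 (by positivity))
  choose P Q hP hPQ hne using hsel
  let M : ℕ → ℝ := fun n => Nat.rec 1 (fun n m => 2 * F (P m n) + 3) n
  have hM : ∀ n, M (n + 1) = 2 * F (P (M n) n) + 3 := fun n => rfl
  have hM0 : M 0 = 1 := rfl
  obtain ⟨x, hx⟩ : ∃ x : ℕ → X, ∀ n, x n = P (M n) n := ⟨_, fun _ => rfl⟩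
  obtain ⟨y, hy⟩ : ∃ y : ℕ → X, ∀ n, y n = Q (M n) n := ⟨_, fun _ => rfl⟩
  have ha0 : 1 < F (x 0) := by rw [hx, ← hM0]; exact hP _ _
  have hstep : ∀ n, 2 * F (x n) + 3 < F (x (n + 1)) := by
    intro n
    rw [hx n, ← hM n, hx (n + 1)]
    exact hP _ _
  have hd0 : ∀ n, dist (x n) (y n) < δ0 := fun n => by
    rw [hx, hy]; exact (hPQ _ _).trans_le (min_le_left _ _)
  have hd1 : ∀ n : ℕ, dist (x n) (y n) < 1 / ((n : ℝ) + 1) := fun n => by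
    rw [hx, hy]; exact (hPQ _ _).trans_le (min_le_right _ _)
  have hdp : ∀ n, 0 < dist (x n) (y n) := fun n => by
    rw [hx, hy]; exact dist_pos.2 (hne _ _)
  have hpow : ∀ n, (2 : ℝ) ^ n ≤ F (x n) := by
    intro n
    induction n with
    | zero => simpa using ha0.le
    | succ n ih => rw [pow_succ]; linarith [hstep n]
  have hpos : ∀ n, 0 < F (x n) := fun n => lt_of_lt_of_le (by positivity) (hpow n)
  have hmono : StrictMono (fun n => F (x n)) :=
    strictMono_nat_of_lt_succ fun n => by linarith [hstep n, hpos n]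
  have hgap : ∀ n m, n < m → F (x n) + 3 < F (x m) := by
    intro n m hnm
    have := hmono.monotone (Nat.succ_le_of_lt hnm)
    simp only [Nat.succ_eq_add_one] at this
    linarith [hstep n, hpos n]
  have hclose : ∀ n m, |F (x n) - F (x m)| < 2 → n = m := by
    intro n m hnm
    rw [abs_lt] at hnm
    rcases lt_trichotomy n m with h1 | h1 | h1
    · linarith [hgap _ _ h1]
    · exact h1
    · linarith [hgap _ _ h1]
  let b : ℕ → X → ℝ := fun n z => max 0 (1 - dist z (x n) / dist (x n) (y n)) / F (x n)
  have hb0 : ∀ n z, dist (x n) (y n) ≤ dist z (x n) → b n z = 0 := by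
    intro n z hz
    have : 1 ≤ dist z (x n) / dist (x n) (y n) := (one_le_div (hdp n)).2 hz
    simp only [b]
    rw [max_eq_left (by linarith), zero_div]
  have hbnear : ∀ n z, b n z ≠ 0 → |F z - F (x n)| < 1 := by
    intro n z hz
    have : dist z (x n) < dist (x n) (y n) := by
      by_contra hc
      exact hz (hb0 n z (not_lt.1 hc))
    have := hFδ (this.trans (hd0 n))
    rwa [Real.dist_eq] at this
  have hbx : ∀ n, b n (x n) = 1 / F (x n) := by
    intro n; simp [b]
  have hbb : ∀ n z, ‖b n z‖ ≤ (1 / 2 : ℝ) ^ n := by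
    intro n z
    have h1 : 0 ≤ dist z (x n) / dist (x n) (y n) := by positivity
    have h2 : max 0 (1 - dist z (x n) / dist (x n) (y n)) ≤ 1 := max_le zero_le_one (by linarith)
    have h3 : 0 ≤ b n z := div_nonneg (le_max_left _ _) (hpos n).le
    rw [Real.norm_of_nonneg h3, one_div_pow]
    exact div_le_div₀ zero_le_one h2 (by positivity) (hpow n)
  have hbu : ∀ n, UniformContinuous (b n) := by
    intro n
    have h1 : UniformContinuous (fun z : X => dist z (x n)) :=
      uniformContinuous_id.dist uniformContinuous_const
    have h2 : LipschitzWith 1 (fun t : ℝ => max 0 t) := by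
      simpa using LipschitzWith.id.const_max (0 : ℝ)
    have h3 : UniformContinuous (fun z : X => 1 - dist z (x n) / dist (x n) (y n)) :=
      uniformContinuous_const.sub (h1.div_const' _)
    exact (h2.uniformContinuous.comp h3).div_const' _
  have hk : UniformContinuous (fun z => ∑' n, b n z) := by
    have := tendstoUniformly_tsum_nat (f := b)
      (summable_geometric_of_lt_one (by norm_num) (by norm_num : (1 / 2 : ℝ) < 1)) hbb
    refine this.uniformContinuous (Filter.Frequently.of_forall fun N => ?_)
    induction N with
    | zero => simpa using uniformContinuous_const
    | succ N ih => simp only [Finset.sum_range_succ]; exact ih.add (hbu N)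
  have hkx : ∀ n, ∑' m, b m (x n) = 1 / F (x n) := by
    intro n
    rw [tsum_eq_single n, hbx]
    intro m hm
    by_contra hc
    exact hm (hclose n m (by linarith [hbnear m _ hc])).symm
  have hky : ∀ n, ∑' m, b m (y n) = 0 := by
    intro n
    have : ∀ m, b m (y n) = 0 := by
      intro m
      by_contra hc
      have h1 := hbnear m _ hc
      have h2 := hFδ (hd0 n)
      rw [Real.dist_eq] at h2
      have h3 := hclose n m (by rw [abs_lt] at *; constructor <;> linarith)
      subst h3
      exact hc (hb0 _ _ (dist_comm _ _).le)
    simp [this]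
  obtain ⟨δ, hδ, hu⟩ := Metric.uniformContinuous_iff.1 (h F _ hF hk) 1 one_pos
  obtain ⟨n, hn⟩ := exists_nat_one_div_lt hδ
  have := hu ((hd1 n).trans hn)
  simp only [hkx, hky] at this
  rw [mul_one_div_cancel (hpos n).ne', mul_zero] at this
  simp at this

theorem stmt2 {X : Type*} [MetricSpace X] :
    IsRingUC X ↔
      ∀ f : X → ℝ, UniformContinuous f →
        ∀ g : ℝ → ℝ, Continuous g → UniformContinuous (g ∘ f) := by
  constructor
  · intro h f hf g hg
    obtain ⟨M, δ1, hδ1, hM⟩ := aux_isolated h (fun x => |f x|)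
      (Real.uniformContinuous_abs.comp hf)
    have hgu := isCompact_Icc.uniformContinuousOn_of_continuous
      (hg.continuousOn (s := Set.Icc (-M) M))
    rw [Metric.uniformContinuousOn_iff] at hgu
    rw [Metric.uniformContinuous_iff] at hf ⊢
    intro ε hε
    obtain ⟨η, hη, hgη⟩ := hgu ε hε
    obtain ⟨δ2, hδ2, hfδ⟩ := hf η hη
    refine ⟨min δ1 δ2, lt_min hδ1 hδ2, fun {x y} hxy => ?_⟩
    have h1 := hxy.trans_le (min_le_left _ _)
    have h2 := hxy.trans_le (min_le_right _ _)
    by_cases hxM : M < |f x|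
    · rw [hM x y hxM h1]; simpa using hε
    by_cases hyM : M < |f y|
    · rw [hM y x hyM (by rwa [dist_comm])]; simpa using hε
    exact hgη _ (abs_le.1 (not_lt.1 hxM)) _ (abs_le.1 (not_lt.1 hyM)) (hfδ h2)
  · intro h f g hf hg
    have hc : Continuous (fun t : ℝ => t ^ 2 / 2) := by fun_prop
    have := ((h _ (hf.add hg) _ hc).sub (h _ hf _ hc)).sub (h _ hg _ hc)
    convert this using 2
    simp
    ring
end

section
/- Let (X,d) be a metric space. Then U(X) is a ring if and only if there exists a Bourbaki bounded set F ⊆ X such that for every ε > 0 there is n ∈ ℕ for which X \ Bⁿ(F,ε) is uniformly isolated. -/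
/-- The open `ε`-enlargement `B(F,ε)` of a set `F`. -/
def enl {X : Type*} [MetricSpace X] (F : Set X) (ε : ℝ) : Set X :=
  ⋃ x ∈ F, Metric.ball x ε

/-- `enlIter F ε n` is the `(n+1)`-fold iterated enlargement `Bⁿ⁺¹(F,ε)`;
so as `n` ranges over `ℕ`, all positive iterates `Bⁿ(F,ε)` occur. -/
def enlIter {X : Type*} [MetricSpace X] (F : Set X) (ε : ℝ) : ℕ → Set X
  | 0 => enl F ε
  | n + 1 => enl (enlIter F ε n) ε

lemma mem_enl' {X : Type*} [MetricSpace X] {F : Set X} {ε : ℝ} {x : X} :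
    x ∈ enl F ε ↔ ∃ y ∈ F, dist x y < ε := by
  simp [enl]

lemma enl_mono' {X : Type*} [MetricSpace X] {F G : Set X} {ε δ : ℝ} (h : F ⊆ G) (h' : ε ≤ δ) :
    enl F ε ⊆ enl G δ := by
  intro x hx
  rw [mem_enl'] at *
  obtain ⟨y, hy, hd⟩ := hx
  exact ⟨y, h hy, hd.trans_le h'⟩

lemma enlIter_mono' {X : Type*} [MetricSpace X] {F G : Set X} {ε δ : ℝ} (h : F ⊆ G) (h' : ε ≤ δ)
    (n : ℕ) : enlIter F ε n ⊆ enlIter G δ n := by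
  induction n with
  | zero => exact enl_mono' h h'
  | succ n ih => exact enl_mono' ih h'

lemma subset_enl' {X : Type*} [MetricSpace X] {F : Set X} {ε : ℝ} (h : 0 < ε) :
    F ⊆ enl F ε := fun x hx => mem_enl'.2 ⟨x, hx, by simpa using h⟩

lemma subset_enlIter' {X : Type*} [MetricSpace X] {F : Set X} {ε : ℝ} (h : 0 < ε) (n : ℕ) :
    F ⊆ enlIter F ε n := by
  induction n with
  | zero => exact subset_enl' h
  | succ n ih => exact ih.trans (subset_enl' h)

/-- the points which are not `δ`-isolated -/
def nonIso (X : Type*) [MetricSpace X] (δ : ℝ) : Set X :=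
  {x | ∃ y, y ≠ x ∧ dist x y < δ}

lemma nonIso_mono {X : Type*} [MetricSpace X] {δ η : ℝ} (h : δ ≤ η) :
    nonIso X δ ⊆ nonIso X η := by
  rintro x ⟨y, hy, hd⟩
  exact ⟨y, hy, hd.trans_le h⟩

lemma bdd_enlIter {X : Type*} [MetricSpace X] {F : Set X} (hF : BourbakiBounded F)
    {f : X → ℝ} (hf : UniformContinuous f) {ε : ℝ}
    (hε : ∀ x y, dist x y < ε → |f x - f y| < 1) (n : ℕ) :
    ∃ M : ℝ, ∀ x ∈ enlIter F ε n, |f x| ≤ M := by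
  have key : ∀ A : Set X, (∃ M : ℝ, ∀ x ∈ A, |f x| ≤ M) →
      ∃ M : ℝ, ∀ x ∈ enl A ε, |f x| ≤ M := by
    rintro A ⟨M, hM⟩
    refine ⟨M + 1, fun x hx => ?_⟩
    obtain ⟨y, hy, hd⟩ := mem_enl'.1 hx
    have h1 := hM y hy
    have h2 := hε x y hd
    have h3 := abs_sub_abs_le_abs_sub (f x) (f y)
    linarith
  induction n with
  | zero => exact key _ (hF f hf)
  | succ n ih => exact key _ ih

lemma ring_of_set {X : Type*} [MetricSpace X] (F : Set X) (hF : BourbakiBounded F)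
    (h : ∀ ε > (0 : ℝ), ∃ n : ℕ, UnifIsolated (Set.univ \ enlIter F ε n)) : IsRingUC X := by
  intro f g hf hg
  obtain ⟨ε₁, h1, hf1⟩ := Metric.uniformContinuous_iff.1 hf 1 one_pos
  obtain ⟨ε₂, h2, hg1⟩ := Metric.uniformContinuous_iff.1 hg 1 one_pos
  obtain ⟨n, δ, hδ, hiso⟩ := h (min ε₁ ε₂) (lt_min h1 h2)
  obtain ⟨M, hM⟩ := bdd_enlIter hF hf (ε := min ε₁ ε₂)
    (fun x y hd => hf1 (hd.trans_le (min_le_left _ _))) n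
  obtain ⟨N, hN⟩ := bdd_enlIter hF hg (ε := min ε₁ ε₂)
    (fun x y hd => hg1 (hd.trans_le (min_le_right _ _))) n
  have hmem : ∀ x y, dist x y < δ → x ≠ y → x ∈ enlIter F (min ε₁ ε₂) n := by
    intro x y hd hne
    by_contra hx
    have := hiso x ⟨trivial, hx⟩
    have hy : y ∈ Metric.ball x δ := by rwa [Metric.mem_ball']
    rw [this] at hy
    exact hne (by simpa using hy.symm)
  rw [Metric.uniformContinuous_iff]
  intro e he
  have hK : 0 < |M| + |N| + 1 := by positivity
  obtain ⟨ε₃, h3, hf3⟩ := Metric.uniformContinuous_iff.1 hf (e / (2 * (|M| + |N| + 1))) (by positivity)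
  obtain ⟨ε₄, h4, hg3⟩ := Metric.uniformContinuous_iff.1 hg (e / (2 * (|M| + |N| + 1))) (by positivity)
  refine ⟨min δ (min ε₃ ε₄), lt_min hδ (lt_min h3 h4), fun {x y} hd => ?_⟩
  by_cases hxy : x = y
  · subst hxy; simpa using he
  have hx := hmem x y (hd.trans_le (min_le_left _ _)) hxy
  have hy := hmem y x (by rw [dist_comm]; exact hd.trans_le (min_le_left _ _)) (Ne.symm hxy)
  have a1 := hM x hx
  have a2 := hN y hy
  have a3 := hf3 (hd.trans_le ((min_le_right _ _).trans (min_le_left _ _)))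
  have a4 := hg3 (hd.trans_le ((min_le_right _ _).trans (min_le_right _ _)))
  rw [Real.dist_eq] at *
  have e1 : f x * g x - f y * g y = f x * (g x - g y) + (f x - f y) * g y := by ring
  have b1 : |f x| * |g x - g y| ≤ (|M| + |N| + 1) * |g x - g y| := by
    gcongr; linarith [le_abs_self M, abs_nonneg N]
  have b2 : |f x - f y| * |g y| ≤ |f x - f y| * (|M| + |N| + 1) := by
    gcongr; linarith [le_abs_self N, abs_nonneg M]
  have c1 := (lt_div_iff₀ (by positivity)).1 a3
  have c2 := (lt_div_iff₀ (by positivity)).1 a4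
  calc |f x * g x - f y * g y| ≤ |f x| * |g x - g y| + |f x - f y| * |g y| := by
        rw [e1, ← abs_mul, ← abs_mul]; exact abs_add_le _ _
    _ < e := by linarith

lemma exists_levels {X : Type*} [MetricSpace X] {ε : ℝ} (hε : 0 < ε) (S : ℕ → Set X)
    (h0 : (S 0).Nonempty) (hS : ∀ k, enl (S k) ε ⊆ S (k + 1)) :
    ∃ f : X → ℝ, UniformContinuous f ∧ ∀ k x, x ∈ S (k + 1) → x ∉ S k → ε * k ≤ f x := by
  have hmono : Monotone S := monotone_nat_of_le_succ fun k => (subset_enl' hε).trans (hS k)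
  have hne : ∀ k, (S k).Nonempty := fun k => h0.mono (hmono (Nat.zero_le k))
  let L : X → ℕ := fun x => sInf {k | x ∈ S k}
  have hL : ∀ x k, x ∈ S k → x ∈ S (L x) ∧ L x ≤ k := fun x k hx =>
    ⟨Nat.sInf_mem (s := {k | x ∈ S k}) ⟨k, hx⟩, Nat.sInf_le hx⟩
  have hstep : ∀ x y k, dist x y < ε → x ∈ S k → y ∈ S (k + 1) := fun x y k hd hx =>
    hS k (mem_enl'.2 ⟨x, hx, by rwa [dist_comm]⟩)
  let f : X → ℝ := fun x => ε * ((L x - 1 : ℕ) : ℝ) + min ε (Metric.infDist x (S (L x - 1)))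
  have hu : ∀ x y (A : Set X), |min ε (Metric.infDist x A) - min ε (Metric.infDist y A)|
      ≤ dist x y := by
    intro x y A
    have h1 : Metric.infDist x A ≤ Metric.infDist y A + dist x y :=
      Metric.infDist_le_infDist_add_dist
    have h2 : Metric.infDist y A ≤ Metric.infDist x A + dist y x :=
      Metric.infDist_le_infDist_add_dist
    rw [dist_comm y x] at h2
    have := @dist_nonneg _ _ x y
    rw [abs_le]
    constructor <;> rcases min_cases ε (Metric.infDist x A) with h | h <;>
      rcases min_cases ε (Metric.infDist y A) with h' | h' <;> linarith
  have main : ∀ x y, dist x y < ε → L x ≤ L y → |f x - f y| ≤ 2 * dist x y := by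
    intro x y hd hle
    have hdn := @dist_nonneg _ _ x y
    by_cases heq : L x - 1 = L y - 1
    · have := hu x y (S (L y - 1))
      simp only [f, heq]
      rw [add_sub_add_left_eq_sub]
      linarith
    · have hy : ∃ k, y ∈ S k := by
        by_contra hcon
        have : L y = 0 := by
          simp only [L, Nat.sInf_eq_zero]
          right
          ext k
          simpa using fun h => hcon ⟨k, h⟩
        omega
      obtain ⟨k, hk⟩ := hy
      have hx := hstep y x k (by rwa [dist_comm]) hk
      have hx1 := (hL x _ hx).1
      have hy1 := (hL y _ (hstep x y _ hd hx1)).2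
      obtain ⟨j, hj⟩ : ∃ j, L x = j + 1 := ⟨L x - 1, by omega⟩
      have hj2 : L y = j + 2 := by omega
      have hyn : y ∉ S (j + 1) := fun h => by
        have := (hL y _ h).2
        omega
      rw [hj] at hx1
      have i1 : Metric.infDist y (S (j + 1)) ≤ dist x y := by
        rw [dist_comm]; exact Metric.infDist_le_dist_of_mem hx1
      have i2 : ε ≤ Metric.infDist y (S j) := by
        rw [Metric.le_infDist (hne j)]
        intro z hz
        by_contra! hlt
        exact hyn (hstep z y j (by rwa [dist_comm]) hz)
      have i3 : Metric.infDist y (S j) ≤ Metric.infDist x (S j) + dist y x :=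
        Metric.infDist_le_infDist_add_dist
      rw [dist_comm y x] at i3
      have i4 := @Metric.infDist_nonneg _ _ (S (j + 1)) y
      simp only [f, hj, hj2]
      simp only [Nat.add_sub_cancel, show j + 2 - 1 = j + 1 by omega]
      push_cast
      rw [abs_le]
      constructor <;> rcases min_cases ε (Metric.infDist x (S j)) with h | h <;>
        rcases min_cases ε (Metric.infDist y (S (j + 1))) with h' | h' <;> linarith
  refine ⟨f, ?_, ?_⟩
  · rw [Metric.uniformContinuous_iff]
    intro e he
    refine ⟨min ε (e / 2), lt_min hε (by positivity), fun {x y} hd => ?_⟩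
    have d1 := hd.trans_le (min_le_left _ _)
    have d2 := hd.trans_le (min_le_right _ _)
    rw [Real.dist_eq]
    rcases le_total (L x) (L y) with h | h
    · have := main x y d1 h
      linarith
    · have := main y x (by rwa [dist_comm]) h
      rw [abs_sub_comm, dist_comm y x] at this
      linarith
  · intro k x h1 h2
    have a := hL x _ h1
    have : L x = k + 1 := by
      by_contra hne'
      exact h2 (hmono (show L x ≤ k by omega) a.1)
    simp only [f, this, Nat.add_sub_cancel]
    have : 0 ≤ min ε (Metric.infDist x (S k)) := le_min hε.le Metric.infDist_nonneg
    linarith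

lemma bdd_nonIso {X : Type*} [MetricSpace X] (hR : IsRingUC X) (f : X → ℝ)
    (hf : UniformContinuous f) : ∃ δ > (0 : ℝ), ∃ M : ℝ, ∀ x ∈ nonIso X δ, |f x| ≤ M := by
  by_contra! hcon
  have hh : UniformContinuous (fun x => |f x|) := by
    exact uniformContinuous_norm.comp hf
  set h : X → ℝ := fun x => |f x| with hdef
  obtain ⟨η, hη, hη1⟩ := Metric.uniformContinuous_iff.1 hh 1 one_pos
  have hP : ∀ δ M : ℝ, ∃ p : X × X, 0 < δ → (p.2 ≠ p.1 ∧ dist p.1 p.2 < δ ∧ M < h p.1) := by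
    intro δ M
    by_cases hδ : 0 < δ
    · obtain ⟨x, ⟨y, hy, hd⟩, hM⟩ := hcon δ hδ M
      exact ⟨(x, y), fun _ => ⟨hy, hd, hM⟩⟩
    · obtain ⟨x, ⟨y, hy, hd⟩, hM⟩ := hcon 1 one_pos M
      exact ⟨(x, y), fun h => absurd h hδ⟩
  choose Φ hΦ using hP
  let T : ℕ → X × X := fun n => Nat.rec (Φ (min η 1) 1)
    (fun n p => Φ (min η (1 / ((n : ℝ) + 2))) (2 * h p.1 + 3)) n
  have hT : ∀ n, (T n).2 ≠ (T n).1 ∧ dist (T n).1 (T n).2 < min η (1 / ((n : ℝ) + 1)) := by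
    intro n
    cases n with
    | zero =>
      have := hΦ (min η 1) 1 (lt_min hη one_pos)
      exact ⟨this.1, by simpa [T] using this.2.1⟩
    | succ n =>
      have := hΦ (min η (1 / ((n : ℝ) + 2))) (2 * h (T n).1 + 3) (lt_min hη (by positivity))
      refine ⟨this.1, ?_⟩
      have e : ((n + 1 : ℕ) : ℝ) + 1 = (n : ℝ) + 2 := by push_cast; ring
      rw [e]
      exact this.2.1
  have hT0 : 1 < h (T 0).1 := (hΦ (min η 1) 1 (lt_min hη one_pos)).2.2
  have hT1 : ∀ n, 2 * h (T n).1 + 3 < h (T (n + 1)).1 := fun n =>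
    (hΦ (min η (1 / ((n : ℝ) + 2))) (2 * h (T n).1 + 3) (lt_min hη (by positivity))).2.2
  have hnn : ∀ x, 0 ≤ h x := fun x => abs_nonneg _
  have hpow : ∀ n, (2 : ℝ) ^ n ≤ h (T n).1 := by
    intro n
    induction n with
    | zero => simpa using hT0.le
    | succ n ih => have := hT1 n; rw [pow_succ]; linarith
  have hpos : ∀ n, 0 < h (T n).1 := fun n => lt_of_lt_of_le (by positivity) (hpow n)
  have hgap : ∀ n m, n < m → h (T n).1 + 3 ≤ h (T m).1 := by
    intro n m hnm
    induction m, hnm using Nat.le_induction with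
    | base => linarith [hT1 n, hnn (T n).1]
    | succ m _ ih => linarith [hT1 m, hnn (T m).1]
  have hgap' : ∀ n m, n ≠ m → 3 ≤ |h (T n).1 - h (T m).1| := by
    intro n m hnm
    rcases lt_or_gt_of_ne hnm with hl | hl
    · rw [abs_sub_comm]; exact le_trans (by linarith [hgap n m hl]) (le_abs_self _)
    · exact le_trans (by linarith [hgap m n hl]) (le_abs_self _)
  have hdp : ∀ n, 0 < dist (T n).1 (T n).2 := fun n => dist_pos.2 (hT n).1.symm
  let b : ℕ → X → ℝ := fun n z => (h (T n).1)⁻¹ * max 0 (1 - dist z (T n).1 / dist (T n).1 (T n).2)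
  have hb0 : ∀ n z, dist (T n).1 (T n).2 ≤ dist z (T n).1 → b n z = 0 := by
    intro n z hz
    have : 1 ≤ dist z (T n).1 / dist (T n).1 (T n).2 := (one_le_div (hdp n)).2 hz
    simp only [b]
    rw [max_eq_left (by linarith), mul_zero]
  have hb1 : ∀ n, b n (T n).1 = (h (T n).1)⁻¹ := by intro n; simp [b]
  have hb2 : ∀ n z, ‖b n z‖ ≤ (1 / 2 : ℝ) ^ n := by
    intro n z
    have h1 : 0 ≤ max 0 (1 - dist z (T n).1 / dist (T n).1 (T n).2) := le_max_left _ _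
    have h2 : max 0 (1 - dist z (T n).1 / dist (T n).1 (T n).2) ≤ 1 :=
      max_le zero_le_one (by have : 0 ≤ dist z (T n).1 / dist (T n).1 (T n).2 := by positivity
                             linarith)
    have h3 := (inv_pos.2 (hpos n)).le
    rw [Real.norm_of_nonneg (mul_nonneg h3 h1)]
    calc _ ≤ (h (T n).1)⁻¹ * 1 := by gcongr
      _ ≤ ((2 : ℝ) ^ n)⁻¹ := by rw [mul_one]; exact inv_anti₀ (by positivity) (hpow n)
      _ = (1 / 2 : ℝ) ^ n := by simp
  have hbuc : ∀ n, UniformContinuous (b n) := by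
    intro n
    rw [Metric.uniformContinuous_iff]
    intro e he
    have hc : 0 < h (T n).1 * dist (T n).1 (T n).2 := mul_pos (hpos n) (hdp n)
    refine ⟨e * (h (T n).1 * dist (T n).1 (T n).2), by positivity, fun {x y} hd => ?_⟩
    rw [Real.dist_eq]
    simp only [b]
    rw [← mul_sub, abs_mul, abs_of_pos (inv_pos.2 (hpos n))]
    have h1 := abs_max_sub_max_le_abs (1 - dist x (T n).1 / dist (T n).1 (T n).2)
      (1 - dist y (T n).1 / dist (T n).1 (T n).2) 0
    rw [max_comm, max_comm _ (0 : ℝ)] at h1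
    have h2 : (1 - dist x (T n).1 / dist (T n).1 (T n).2) -
      (1 - dist y (T n).1 / dist (T n).1 (T n).2) =
      (dist y (T n).1 - dist x (T n).1) / dist (T n).1 (T n).2 := by ring
    rw [h2, abs_div, abs_of_pos (hdp n)] at h1
    have h3 : |dist y (T n).1 - dist x (T n).1| ≤ dist x y := by
      rw [dist_comm x y]; exact abs_dist_sub_le _ _ _
    have h4 := hpos n
    calc _ ≤ (h (T n).1)⁻¹ * (dist x y / dist (T n).1 (T n).2) := by
          gcongr; exact h1.trans (by gcongr)
      _ = dist x y / (h (T n).1 * dist (T n).1 (T n).2) := by field_simp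
      _ < e := by rwa [div_lt_iff₀ hc]
  let g : X → ℝ := fun z => ∑' n, b n z
  have hg : UniformContinuous g := by
    have hu := tendstoUniformly_tsum_nat (f := b) (summable_geometric_two) hb2
    refine hu.uniformContinuous (Filter.Frequently.of_forall fun N => ?_)
    induction N with
    | zero => simpa using uniformContinuous_const
    | succ N ih => simpa [Finset.sum_range_succ] using ih.add (hbuc N)
  have hprod := hR _ _ hh hg
  obtain ⟨δ, hδ, hd⟩ := Metric.uniformContinuous_iff.1 hprod 1 one_pos
  obtain ⟨n, hn⟩ := exists_nat_one_div_lt hδ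
  have hn1 := (hT n).2.trans_le (min_le_right _ _)
  have hclose : ∀ m, dist (T m).1 (T m).2 < η := fun m => (hT m).2.trans_le (min_le_left _ _)
  have hgx : g (T n).1 = (h (T n).1)⁻¹ := by
    rw [← hb1 n]
    refine tsum_eq_single n fun m hm => hb0 m _ ?_
    by_contra! hlt
    have := hη1 (hlt.trans (hclose m))
    rw [Real.dist_eq] at this
    linarith [hgap' n m hm.symm]
  have hgy : g (T n).2 = 0 := by
    have : ∀ m, b m (T n).2 = 0 := by
      intro m
      by_cases hm : m = n
      · subst hm; exact hb0 m _ (by rw [dist_comm])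
      refine hb0 m _ ?_
      by_contra! hlt
      have h1 := hη1 (hlt.trans (hclose m))
      have h2 := hη1 (hclose n)
      rw [Real.dist_eq] at h1 h2
      have := abs_sub_le (h (T n).1) (h (T n).2) (h (T m).1)
      linarith [hgap' n m (Ne.symm hm)]
    simp [g, this]
  have := hd (hn1.trans hn)
  rw [hgx, hgy, Real.dist_eq, mul_zero, sub_zero, mul_inv_cancel₀ (hpos n).ne'] at this
  simp at this

lemma exists_finite {X : Type*} [MetricSpace X] (hR : IsRingUC X) {ε m : ℝ} (hε : 0 < ε)
    (hm : 0 < m) : ∃ P : Set X, P.Finite ∧ P ⊆ nonIso X m ∧ ∃ n : ℕ, ∃ δ > (0 : ℝ),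
      nonIso X δ ⊆ enlIter P ε n := by
  by_contra! hcon
  let Q : Set X → Prop := fun S => ∃ P : Set X, P.Finite ∧ P ⊆ nonIso X m ∧ ∃ n, S ⊆ enlIter P ε n
  have hpick : ∀ (k : ℕ) (S : Set X), ∃ x, Q S → x ∈ nonIso X m ∧
      x ∈ nonIso X (1 / ((k : ℝ) + 1)) ∧ x ∉ S := by
    intro k S
    have hk : (0 : ℝ) < min m (1 / ((k : ℝ) + 1)) := lt_min hm (by positivity)
    by_cases hQ : Q S
    · obtain ⟨P, hP, hPm, n, hn⟩ := hQ
      obtain ⟨x, hx, hx'⟩ := Set.not_subset.1 (hcon P hP hPm n _ hk)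
      exact ⟨x, fun _ => ⟨nonIso_mono (min_le_left _ _) hx, nonIso_mono (min_le_right _ _) hx,
        fun h => hx' (hn h)⟩⟩
    · obtain ⟨x, -⟩ := Set.not_subset.1 (hcon ∅ Set.finite_empty (Set.empty_subset _) 0 _ hk)
      exact ⟨x, fun h => absurd h hQ⟩
  choose pick hpick using hpick
  have hQ0 : Q ∅ := ⟨∅, Set.finite_empty, Set.empty_subset _, 0, Set.empty_subset _⟩
  have hQs : ∀ x S, x ∈ nonIso X m → Q S → Q (enl (insert x S) ε) := by
    rintro x S hx ⟨P, hP, hPm, n, hn⟩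
    refine ⟨insert x P, hP.insert x, Set.insert_subset hx hPm, n + 1, enl_mono' ?_ le_rfl⟩
    exact Set.insert_subset (subset_enlIter' hε n (Set.mem_insert _ _))
      (hn.trans (enlIter_mono' (Set.subset_insert _ _) le_rfl n))
  let S : ℕ → Set X := fun k => Nat.rec (enl (insert (pick 0 ∅) ∅) ε)
    (fun k A => enl (insert (pick k A) A) ε) k
  have hSs : ∀ k, S (k + 1) = enl (insert (pick k (S k)) (S k)) ε := fun k => rfl
  have hS : ∀ k, Q (S k) := by
    intro k
    induction k with
    | zero => exact hQs _ _ (hpick 0 _ hQ0).1 hQ0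
    | succ k ih => exact hQs _ _ (hpick k _ ih).1 ih
  obtain ⟨f, hf, hfk⟩ := exists_levels hε S
    ⟨pick 0 ∅, subset_enl' hε (Set.mem_insert _ _)⟩
    (fun k => by rw [hSs]; exact enl_mono' (Set.subset_insert _ _) le_rfl)
  obtain ⟨δ, hδ, M, hM⟩ := bdd_nonIso hR f hf
  obtain ⟨n₁, hn₁⟩ := exists_nat_one_div_lt hδ
  obtain ⟨n₂, hn₂⟩ := exists_nat_gt (M / ε)
  let k := max n₁ n₂
  have hp := hpick k _ (hS k)
  have h1 := hfk k _ (by rw [hSs]; exact subset_enl' hε (Set.mem_insert _ _)) hp.2.2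
  have hk1 : (n₁ : ℝ) ≤ k := by exact_mod_cast le_max_left _ _
  have hk2 : (n₂ : ℝ) ≤ k := by exact_mod_cast le_max_right _ _
  have h2 := hM (pick k (S k)) (nonIso_mono (le_trans (by gcongr) hn₁.le) hp.2.1)
  rw [div_lt_iff₀ hε] at hn₂
  have h3 := le_abs_self (f (pick k (S k)))
  nlinarith

theorem stmt3 {X : Type*} [MetricSpace X] :
    IsRingUC X ↔
      ∃ F : Set X, BourbakiBounded F ∧
        ∀ ε > (0 : ℝ), ∃ n : ℕ, UnifIsolated (Set.univ \ enlIter F ε n) := by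
  constructor
  · intro hR
    have hp : ∀ k : ℕ, (0 : ℝ) < 1 / ((k : ℝ) + 1) := fun k => by positivity
    choose P hPf hPm n δ hδ hsub using fun k : ℕ => exists_finite hR (hp k) (hp k)
    refine ⟨⋃ k, P k, ?_, ?_⟩
    · intro f hf
      obtain ⟨η, hη, M, hM⟩ := bdd_nonIso hR f hf
      obtain ⟨N, hN⟩ := exists_nat_one_div_lt hη
      have hfin : (⋃ k ∈ Finset.range N, P k).Finite :=
        Set.Finite.biUnion (Finset.finite_toSet _) fun k _ => hPf k
      obtain ⟨M', hM'⟩ := (hfin.image fun x => |f x|).bddAbove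
      refine ⟨max M M', fun x hx => ?_⟩
      obtain ⟨k, hk⟩ := Set.mem_iUnion.1 hx
      by_cases hkN : k < N
      · refine le_max_of_le_right (hM' ⟨x, ?_, rfl⟩)
        simp only [Set.mem_iUnion]
        exact ⟨k, Finset.mem_range.2 hkN, hk⟩
      · refine le_max_of_le_left (hM x (nonIso_mono ?_ (hPm k hk)))
        have : (N : ℝ) ≤ k := by exact_mod_cast not_lt.1 hkN
        exact le_trans (by gcongr) hN.le
    · intro ε hε
      obtain ⟨k, hk⟩ := exists_nat_one_div_lt hε
      refine ⟨n k, δ k, hδ k, ?_⟩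
      rintro x ⟨-, hx⟩
      ext y
      rw [Metric.mem_ball', Set.mem_singleton_iff]
      constructor
      · intro hd
        by_contra hne
        exact hx (enlIter_mono' (Set.subset_iUnion P k) hk.le _ (hsub k ⟨y, hne, hd⟩))
      · rintro rfl
        simpa using hδ k
  · rintro ⟨F, hF, h⟩
    exact ring_of_set F hF h
end

section
/- Let (X,𝒰) be a uniform space, let f : X → ℝ be uniformly continuous and let g : ℝ → ℝ be continuous. Suppose that for each symmetric entourage U ∈ 𝒰 there exist a set B ⊆ X and n ∈ ℕ such that f(B) is a bounded subset of ℝ and the restriction of g ∘ f to X \ Uⁿ[B] is uniformly continuous. Then g ∘ f is uniformly continuous on X. -/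
/-- A relation is symmetric: `(x,y) ∈ U ↔ (y,x) ∈ U`. -/
def SymmRel {X : Type*} (U : Set (X × X)) : Prop :=
  ∀ x y : X, (x, y) ∈ U ↔ (y, x) ∈ U

/-- The image `U[A] = ⋃ x ∈ A, U[x]` of a set under a relation. -/
def relImage {X : Type*} (U : Set (X × X)) (A : Set X) : Set X :=
  ⋃ x ∈ A, UniformSpace.ball x U

/-- `relIter U n` is the `(n+1)`-fold composition `Uⁿ⁺¹ = U ∘ ⋯ ∘ U`;
so as `n` ranges over `ℕ`, all positive powers `Uⁿ` occur. -/
def relIter {X : Type*} (U : Set (X × X)) : ℕ → Set (X × X)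
  | 0 => U
  | n + 1 => SetRel.comp U (relIter U n)

theorem relIter_dist_aux {X : Type*} (f : X → ℝ) (n : ℕ) : ∀ x y : X,
    (x, y) ∈ relIter {p : X × X | dist (f p.1) (f p.2) < 1} n → dist (f x) (f y) < n + 1 := by
  induction n with
  | zero => intro x y h; simpa [relIter] using h
  | succ k ih =>
    intro x y h
    obtain ⟨z, h1, h2⟩ := h
    have h1' : dist (f x) (f z) < 1 := h1
    have h2' := ih z y h2
    have := dist_triangle (f x) (f z) (f y)
    push_cast
    linarith

theorem stmt6 {X : Type*} [UniformSpace X] (f : X → ℝ) (g : ℝ → ℝ)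
    (hf : UniformContinuous f) (hg : Continuous g)
    (h : ∀ U ∈ uniformity X, SymmRel U →
      ∃ (B : Set X) (n : ℕ), Bornology.IsBounded (f '' B) ∧
        UniformContinuousOn (g ∘ f) (Set.univ \ relImage (relIter U n) B)) :
    UniformContinuous (g ∘ f) := by
  have hf' : ∀ ε > 0, {p : X × X | dist (f p.1) (f p.2) < ε} ∈ uniformity X :=
    fun ε hε => hf (Metric.dist_mem_uniformity hε)
  obtain ⟨B, n, hB, hu⟩ := h {p : X × X | dist (f p.1) (f p.2) < 1} (hf' 1 one_pos)
    (fun x y => by simp [dist_comm])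
  obtain ⟨R, hR⟩ := hB.subset_closedBall 0
  have hM : ∀ x ∈ relImage (relIter {p : X × X | dist (f p.1) (f p.2) < 1} n) B,
      dist (f x) 0 ≤ R + n + 1 := by
    intro x hx
    simp only [relImage, Set.mem_iUnion] at hx
    obtain ⟨b, hb, hbx⟩ := hx
    have h1 := relIter_dist_aux f n b x hbx
    have h2 : dist (f b) 0 ≤ R := hR ⟨b, hb, rfl⟩
    have := dist_triangle (f x) (f b) 0
    rw [dist_comm] at h1
    linarith
  have hK := (isCompact_closedBall (0 : ℝ) (R + n + 2)).uniformContinuousOn_of_continuous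
    hg.continuousOn
  rw [Metric.uniformContinuousOn_iff] at hK
  intro W hW
  obtain ⟨ε, hε, hεW⟩ := Metric.mem_uniformity_dist.1 hW
  obtain ⟨δ, hδ, hd⟩ := hK ε hε
  have hV := hu hW
  rw [Filter.mem_map, Filter.mem_inf_principal] at hV
  rw [Filter.mem_map]
  filter_upwards [hV, hf' δ hδ, hf' 1 one_pos] with ⟨x, y⟩ h1 h2 h3
  simp only [Set.mem_setOf_eq] at h2 h3
  have t1 := dist_triangle (f x) (f y) 0
  have t2 := dist_triangle (f y) (f x) 0
  rw [dist_comm (f y) (f x)] at t2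
  by_cases hx : x ∈ relImage (relIter {p : X × X | dist (f p.1) (f p.2) < 1} n) B
  · have := hM x hx
    exact hεW (hd _ (Metric.mem_closedBall.2 (by linarith)) _
      (Metric.mem_closedBall.2 (by linarith)) h2)
  by_cases hy : y ∈ relImage (relIter {p : X × X | dist (f p.1) (f p.2) < 1} n) B
  · have := hM y hy
    exact hεW (hd _ (Metric.mem_closedBall.2 (by linarith)) _
      (Metric.mem_closedBall.2 (by linarith)) h2)
  exact h1 ⟨⟨trivial, hx⟩, ⟨trivial, hy⟩⟩
end

section
/- Let (Y,d) be a metric space and X a dense subset of Y. If every subset of the metric subspace (X,d) that is Bourbaki bounded in X is totally bounded, then every subset of (Y,d) that is Bourbaki bounded in Y is totally bounded. -/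
theorem stmt10 {Y : Type*} [MetricSpace Y] (X : Set Y) (hX : Dense X)
    (h : ∀ A : Set X, BourbakiBounded A → TotallyBounded A) :
    ∀ B : Set Y, BourbakiBounded B → TotallyBounded B := by
  intro B hB
  by_contra hnt
  rw [Metric.totallyBounded_iff] at hnt
  push Not at hnt
  obtain ⟨ε, hε, hcov⟩ := hnt
  obtain ⟨b, hbB, hsep⟩ := exists_seq_of_forall_finset_exists (fun y : Y => y ∈ B)
    (fun x y => ε ≤ dist y x) (by
      intro s _
      have h1 := hcov (s : Set Y) s.finite_toSet
      obtain ⟨y, hyB, hy⟩ := Set.not_subset.1 h1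
      refine ⟨y, hyB, fun x hx => ?_⟩
      by_contra hlt
      exact hy (Set.mem_iUnion₂.2 ⟨x, hx, by simpa using hlt⟩))
  have hex : ∀ n : ℕ, ∃ x : X, dist (b n) (x : Y) < min (ε / 4) (1 / ((n : ℝ) + 1)) := by
    intro n
    obtain ⟨x, hx, hd⟩ := hX.exists_dist_lt (b n) (lt_min (by positivity : 0 < ε / 4)
      (by positivity : 0 < 1 / ((n : ℝ) + 1)))
    exact ⟨⟨x, hx⟩, hd⟩
  choose x hx using hex
  have hA : BourbakiBounded (Set.range x) := by
    intro f hf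
    have hui : IsUniformInducing (Subtype.val : X → Y) := isUniformInducing_val X
    have hdr : DenseRange (Subtype.val : X → Y) := hX.denseRange_val
    have hg := uniformContinuous_uniformly_extend hui hdr hf
    have hgf := uniformly_extend_of_ind hui hdr hf
    set g := (hui.isDenseInducing hdr).extend f with hgdef
    obtain ⟨M, hM⟩ := hB g hg
    obtain ⟨δ, hδ, hgd⟩ := Metric.uniformContinuous_iff.1 hg 1 one_pos
    obtain ⟨N, hN⟩ := exists_nat_one_div_lt hδ
    refine ⟨(M + 1) ⊔ ∑ i ∈ Finset.range N, |f (x i)|, ?_⟩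
    rintro _ ⟨n, rfl⟩
    by_cases hn : n < N
    · exact le_max_of_le_right (Finset.single_le_sum (f := fun i => |f (x i)|)
        (fun i _ => abs_nonneg _) (Finset.mem_range.2 hn))
    · apply le_max_of_le_left
      have h2 : 1 / ((n : ℝ) + 1) ≤ 1 / ((N : ℝ) + 1) :=
        one_div_le_one_div_of_le (by positivity) (by
          have : (N : ℝ) ≤ n := by exact_mod_cast not_lt.1 hn
          linarith)
      have h3 := hgd (((hx n).trans_le (min_le_right _ _)).trans_le h2 |>.trans hN)
      rw [hgf, Real.dist_eq] at h3
      have h4 := hM _ (hbB n)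
      have h5 := abs_sub_abs_le_abs_sub (f (x n)) (g (b n))
      rw [abs_sub_comm] at h5
      linarith
  obtain ⟨t, ht, hcov'⟩ := Metric.totallyBounded_iff.1 (h _ hA) (ε / 4) (by positivity)
  have hc : ∀ n, ∃ c ∈ t, dist (x n) c < ε / 4 := by
    intro n
    have := hcov' ⟨n, rfl⟩
    simpa using this
  choose c hct hc using hc
  obtain ⟨m, -, n, -, hne, heq⟩ := Set.infinite_univ.exists_ne_map_eq_of_mapsTo
    (f := c) (s := (Set.univ : Set ℕ)) (t := t) (fun n _ => hct n) ht
  have key : dist (b m) (b n) < ε := by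
    have h1 := (hx m).trans_le (min_le_left _ _)
    have h2 := (hx n).trans_le (min_le_left _ _)
    have h3 := hc m
    have h4 := hc n
    rw [heq] at h3
    rw [Subtype.dist_eq] at h3 h4
    have h5 := dist_triangle (b m) (x m) (c n)
    have h6 := dist_triangle (b n) (x n) (c n)
    have h7 := dist_triangle_right (b m) (b n) (c n)
    linarith
  rcases lt_or_gt_of_ne hne with hl | hl
  · have := hsep m n hl
    rw [dist_comm] at this
    linarith
  · have := hsep n m hl
    linarith
end

section
/- Let (Y,d) be a metric space and X a dense subset of Y. Then there exists a totally bounded set K ⊆ Y such that for each ε > 0 the set Y \ B(K,ε) is uniformly isolated in Y, if and only if there exists a totally bounded set L ⊆ X such that for each ε > 0 the set X \ B_X(L,ε) is uniformly isolated in the metric subspace (X,d), where B_X(L,ε) is the ε-enlargement of L computed in X. -/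
theorem stmt11 {Y : Type*} [MetricSpace Y] (X : Set Y) (hX : Dense X) :
    (∃ K : Set Y, TotallyBounded K ∧
        ∀ ε > (0 : ℝ), UnifIsolated (Set.univ \ enl K ε)) ↔
      (∃ L : Set X, TotallyBounded L ∧
        ∀ ε > (0 : ℝ), UnifIsolated (Set.univ \ enl L ε)) := by
  constructor
  · rintro ⟨K, hK, hiso⟩
    have key : ∀ n : ℕ, ∃ G : Set X, G.Finite ∧
        (∀ k ∈ K, ∃ g ∈ G, dist k (g : Y) < 1 / ((n : ℝ) + 1)) ∧
        (∀ g ∈ G, ∃ k ∈ K, dist k (g : Y) < 1 / ((n : ℝ) + 1)) := by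
      intro n
      have he : (0 : ℝ) < 1 / ((n : ℝ) + 1) := by positivity
      obtain ⟨t, htK, htf, hcov⟩ := Metric.finite_approx_of_totallyBounded hK _ (half_pos he)
      have hf : ∀ y : Y, ∃ x : X, dist y (x : Y) < 1 / ((n : ℝ) + 1) / 2 := by
        intro y
        obtain ⟨x, hx, hd⟩ := hX.exists_dist_lt y (half_pos he)
        exact ⟨⟨x, hx⟩, hd⟩
      choose f hf using hf
      refine ⟨f '' t, htf.image f, ?_, ?_⟩
      · intro k hk
        obtain ⟨y, hy, hky⟩ := Set.mem_iUnion₂.1 (hcov hk)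
        refine ⟨f y, ⟨y, hy, rfl⟩, ?_⟩
        have := dist_triangle k y (f y)
        have := hf y
        rw [Metric.mem_ball] at hky
        linarith
      · rintro _ ⟨y, hy, rfl⟩
        exact ⟨y, htK hy, by have := hf y; linarith⟩
    choose G hGf hG1 hG2 using key
    refine ⟨⋃ n, G n, ?_, ?_⟩
    · rw [Metric.totallyBounded_iff]
      intro ε hε
      obtain ⟨N, hN⟩ := exists_nat_one_div_lt (half_pos hε)
      refine ⟨⋃ n ∈ Set.Iic N, G n, (Set.finite_Iic N).biUnion fun n _ => hGf n, ?_⟩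
      intro x hx
      obtain ⟨n, hn⟩ := Set.mem_iUnion.1 hx
      rcases le_total n N with h | h
      · exact Set.mem_iUnion₂.2 ⟨x, Set.mem_iUnion₂.2 ⟨n, h, hn⟩, Metric.mem_ball_self hε⟩
      · obtain ⟨k, hk, hkx⟩ := hG2 n x hn
        obtain ⟨g, hg, hkg⟩ := hG1 N k hk
        refine Set.mem_iUnion₂.2 ⟨g, Set.mem_iUnion₂.2 ⟨N, le_refl N, hg⟩, ?_⟩
        rw [Metric.mem_ball, Subtype.dist_eq]
        have h1 := dist_triangle_left (x : Y) (g : Y) k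
        have h2 : 1 / ((n : ℝ) + 1) ≤ 1 / ((N : ℝ) + 1) := Nat.one_div_le_one_div h
        linarith
    · intro ε hε
      obtain ⟨δ, hδ, h⟩ := hiso (ε / 2) (half_pos hε)
      refine ⟨δ, hδ, ?_⟩
      rintro x ⟨-, hx⟩
      have hxK : (x : Y) ∈ Set.univ \ enl K (ε / 2) := by
        refine ⟨trivial, fun hc => hx ?_⟩
        obtain ⟨k, hk, hxk⟩ := Set.mem_iUnion₂.1 hc
        obtain ⟨N, hN⟩ := exists_nat_one_div_lt (half_pos hε)
        obtain ⟨g, hg, hkg⟩ := hG1 N k hk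
        refine Set.mem_iUnion₂.2 ⟨g, Set.mem_iUnion.2 ⟨N, hg⟩, ?_⟩
        rw [Metric.mem_ball] at hxk
        rw [Metric.mem_ball, Subtype.dist_eq]
        have h1 := dist_triangle (x : Y) k (g : Y)
        linarith
      have hb := h x hxK
      ext z
      constructor
      · intro hz
        have : (z : Y) ∈ Metric.ball (x : Y) δ := hz
        rw [hb] at this
        exact Subtype.ext this
      · rintro rfl
        exact Metric.mem_ball_self hδ
  · rintro ⟨L, hL, hiso⟩
    refine ⟨Subtype.val '' L, hL.image uniformContinuous_subtype_val, ?_⟩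
    intro ε hε
    obtain ⟨δ, hδ, h⟩ := hiso (ε / 2) (half_pos hε)
    refine ⟨δ / 2, half_pos hδ, ?_⟩
    rintro y ⟨-, hy⟩
    ext z
    constructor
    swap
    · rintro rfl
      exact Metric.mem_ball_self (half_pos hδ)
    intro hz
    rw [Metric.mem_ball] at hz
    refine eq_of_forall_dist_le fun r hr => ?_
    have hη : 0 < min (r / 2) (min (δ / 4) (ε / 2)) := by positivity
    obtain ⟨x, hx, hyx⟩ := hX.exists_dist_lt y hη
    obtain ⟨w, hw, hzw⟩ := hX.exists_dist_lt z hη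
    simp only [lt_min_iff] at hyx hzw
    have hxL : (⟨x, hx⟩ : X) ∈ Set.univ \ enl L (ε / 2) := by
      refine ⟨trivial, fun hc => hy ?_⟩
      obtain ⟨l, hl, hxl⟩ := Set.mem_iUnion₂.1 hc
      refine Set.mem_iUnion₂.2 ⟨l, ⟨l, hl, rfl⟩, ?_⟩
      rw [Metric.mem_ball, Subtype.dist_eq] at hxl
      rw [Metric.mem_ball]
      have := dist_triangle y x l
      simp only at hxl
      linarith [hyx.2.2]
    have hwx : (⟨w, hw⟩ : X) ∈ Metric.ball (⟨x, hx⟩ : X) δ := by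
      rw [Metric.mem_ball, Subtype.dist_eq]
      have h1 := dist_triangle4 w z y x
      rw [dist_comm w z] at h1
      change dist w x < δ
      linarith [hyx.2.1, hzw.2.1]
    rw [h _ hxL] at hwx
    have e : w = x := congrArg Subtype.val hwx
    subst e
    have := dist_triangle_right z y w
    linarith [hyx.1, hzw.1]
end

section
/- Let (X,d) be a metric space. Then U(X) is a ring if and only if for every pair of sequences (xₙ), (yₙ) in X with xₙ ≠ yₙ for all n and d(xₙ,yₙ) → 0, both sets {xₙ : n ∈ ℕ} and {yₙ : n ∈ ℕ} are Bourbaki bounded in X. -/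
theorem aux_sub {X : Type*} [MetricSpace X] (hR : IsRingUC X) (f : X → ℝ)
    (hf : UniformContinuous f) (δ : ℝ) (hδ : ∀ a b, dist a b < δ → |f a - f b| < 1/4)
    (x y : ℕ → X) (hne : ∀ n, x n ≠ y n) (hd : ∀ n, dist (x n) (y n) < δ)
    (ht : Filter.Tendsto (fun n => dist (x n) (y n)) Filter.atTop (nhds 0))
    (hp : ∀ n, (2:ℝ)^n ≤ |f (x n)|) (hs : ∀ j k, j < k → |f (x j)| + 1 ≤ |f (x k)|) : False := by
  have hpos : ∀ n, 0 < dist (x n) (y n) := fun n => dist_pos.2 (hne n)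
  have hsep : ∀ j k, j ≠ k → 1 ≤ |f (x j) - f (x k)| := by
    intro j k hjk
    rcases lt_or_gt_of_ne hjk with h | h
    · have := hs j k h
      have := abs_sub_abs_le_abs_sub (f (x k)) (f (x j))
      rw [abs_sub_comm]; linarith
    · have := hs k j h
      have := abs_sub_abs_le_abs_sub (f (x j)) (f (x k))
      linarith
  let b : ℕ → X → ℝ := fun k z => (f (x k))⁻¹ * max 0 (1 - dist z (x k) / dist (x k) (y k))
  have hb0 : ∀ k z, dist (x k) (y k) ≤ dist z (x k) → b k z = 0 := by
    intro k z h
    have : 1 ≤ dist z (x k) / dist (x k) (y k) := (one_le_div (hpos k)).2 h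
    simp only [b]
    rw [max_eq_left (by linarith), mul_zero]
  have hbuc : ∀ k, UniformContinuous (b k) := by
    intro k
    have h1 : UniformContinuous (fun z => dist z (x k)) :=
      uniformContinuous_id.dist uniformContinuous_const
    have h2 : UniformContinuous (fun z => max (0:ℝ) (1 - dist z (x k) / dist (x k) (y k))) := by
      have h3 : UniformContinuous (fun z => 1 - dist z (x k) / dist (x k) (y k)) :=
        uniformContinuous_const.sub (h1.div_const' _)
      have h4 : UniformContinuous (fun t : ℝ => max 0 t) :=
        (LipschitzWith.id.const_max 0).uniformContinuous
      exact h4.comp h3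
    exact h2.const_mul' _
  have hbb : ∀ k z, ‖b k z‖ ≤ (1/2:ℝ)^k := by
    intro k z
    have h0 : 0 ≤ dist z (x k) / dist (x k) (y k) := by positivity
    simp only [b, norm_mul, norm_inv, Real.norm_eq_abs]
    have h1 : |max 0 (1 - dist z (x k) / dist (x k) (y k))| ≤ 1 := by
      rw [abs_of_nonneg (le_max_left _ _)]
      exact max_le (by norm_num) (by linarith)
    have h2 : |f (x k)|⁻¹ ≤ (1/2:ℝ)^k := by
      rw [one_div, inv_pow]
      exact inv_anti₀ (by positivity) (hp k)
    calc _ ≤ (1/2:ℝ)^k * 1 := by gcongr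
      _ = _ := mul_one _
  have hguc : UniformContinuous (fun z => ∑' k, b k z) := by
    have := tendstoUniformly_tsum (summable_geometric_two) hbb
    refine this.uniformContinuous (Filter.Frequently.of_forall fun s => ?_)
    classical
    induction s using Finset.induction_on with
    | empty => simpa using uniformContinuous_const
    | insert a s ha ih =>
      simp only [Finset.sum_insert ha]
      exact (hbuc a).add ih
  have hgx : ∀ k, ∑' j, b j (x k) = (f (x k))⁻¹ := by
    intro k
    rw [tsum_eq_single k]
    · simp [b]
    · intro j hj
      apply hb0
      by_contra! hlt
      have := hδ _ _ (hlt.trans (hd j))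
      have := hsep k j hj.symm
      linarith
  have hgy : ∀ k, ∑' j, b j (y k) = 0 := by
    intro k
    have : ∀ j, b j (y k) = 0 := by
      intro j
      apply hb0
      by_cases hj : j = k
      · subst hj; rw [dist_comm]
      by_contra! hlt
      have h1 := hδ _ _ (hlt.trans (hd j))
      have h2 := hsep k j (Ne.symm hj)
      have h3 := hδ _ _ (hd k)
      have := abs_sub_le (f (x k)) (f (y k)) (f (x j))
      linarith
    simp [this]
  have hfg := hR f _ hf hguc
  obtain ⟨η, hη, H⟩ := Metric.uniformContinuous_iff.1 hfg 1 one_pos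
  obtain ⟨k, hk⟩ := (ht.eventually (gt_mem_nhds hη)).exists
  have := H hk
  have hne0 : f (x k) ≠ 0 := by
    have : (0:ℝ) < |f (x k)| := lt_of_lt_of_le (by positivity) (hp k)
    exact abs_pos.1 this
  simp [hgx, hgy, hne0] at this

theorem aux_fwd {X : Type*} [MetricSpace X] (hR : IsRingUC X)
    (x y : ℕ → X) (hne : ∀ n, x n ≠ y n)
    (ht : Filter.Tendsto (fun n => dist (x n) (y n)) Filter.atTop (nhds 0)) :
    BourbakiBounded (Set.range x) := by
  intro f hf
  by_contra! hunb
  obtain ⟨δ, hδ, H⟩ := Metric.uniformContinuous_iff.1 hf (1/4) (by norm_num)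
  obtain ⟨N, hN⟩ := Filter.eventually_atTop.1 (ht.eventually (gt_mem_nhds hδ))
  have step : ∀ n, ∃ m, n < m ∧ N ≤ m ∧ 2 * |f (x n)| + 1 ≤ |f (x m)| := by
    intro n
    obtain ⟨z, ⟨m, rfl⟩, hm⟩ := hunb (2 * |f (x n)| + 1 +
      ∑ i ∈ Finset.range (n + N + 1), |f (x i)|)
    have hS : 0 ≤ ∑ i ∈ Finset.range (n + N + 1), |f (x i)| :=
      Finset.sum_nonneg fun _ _ => abs_nonneg _
    have hmm : n + N + 1 ≤ m := by
      by_contra! hlt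
      have := Finset.single_le_sum (f := fun i => |f (x i)|) (fun _ _ => abs_nonneg _)
        (Finset.mem_range.2 hlt)
      have := abs_nonneg (f (x n))
      linarith
    exact ⟨m, by omega, by omega, by linarith⟩
  choose s hs1 hs2 hs3 using step
  let φ : ℕ → ℕ := fun k => s^[k+1] 0
  have hφ : ∀ k, φ (k+1) = s (φ k) := fun k => Function.iterate_succ_apply' s _ _
  have hmono : StrictMono φ := strictMono_nat_of_lt_succ fun k => by rw [hφ]; exact hs1 _
  have hgN : ∀ k, N ≤ φ k := by
    intro k
    have : φ k = s (s^[k] 0) := Function.iterate_succ_apply' s _ _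
    rw [this]; exact hs2 _
  have hp : ∀ k, (2:ℝ)^k ≤ |f (x (φ k))| := by
    intro k
    induction k with
    | zero =>
      have := hs3 0
      have := abs_nonneg (f (x 0))
      simp only [φ, zero_add, Function.iterate_one, pow_zero]; linarith
    | succ k ih => rw [hφ, pow_succ]; have := hs3 (φ k); linarith
  refine aux_sub hR f hf δ (fun a b h => by simpa [Real.dist_eq] using H h)
    (x ∘ φ) (y ∘ φ) (fun n => hne _) (fun n => hN _ (hgN n))
    (ht.comp hmono.tendsto_atTop) hp ?_
  intro j k hjk
  induction k, hjk using Nat.le_induction with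
  | base => simp only [Function.comp, Nat.succ_eq_add_one, hφ]
            have := hs3 (φ j); have := abs_nonneg (f (x (φ j))); linarith
  | succ k hk ih =>
    simp only [Function.comp, hφ] at *
    have := hs3 (φ k); have := abs_nonneg (f (x (φ k))); linarith

theorem stmt12 {X : Type*} [MetricSpace X] :
    IsRingUC X ↔
      ∀ x y : ℕ → X, (∀ n, x n ≠ y n) →
        Filter.Tendsto (fun n => dist (x n) (y n)) Filter.atTop (nhds 0) →
        BourbakiBounded (Set.range x) ∧ BourbakiBounded (Set.range y) := by
  constructor
  · intro hR x y hne ht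
    exact ⟨aux_fwd hR x y hne ht, aux_fwd hR y x (fun n => (hne n).symm)
      (by simpa only [dist_comm] using ht)⟩
  · intro h f g hf hg
    by_contra hn
    rw [Metric.uniformContinuous_iff] at hn
    push Not at hn
    obtain ⟨ε, hε, H⟩ := hn
    choose x y hxy hfar using fun n : ℕ => H (1 / ((n:ℝ) + 1)) Nat.one_div_pos_of_nat
    have ht : Filter.Tendsto (fun n => dist (x n) (y n)) Filter.atTop (nhds 0) :=
      squeeze_zero (fun _ => dist_nonneg) (fun n => (hxy n).le)
        tendsto_one_div_add_atTop_nhds_zero_nat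
    have hne : ∀ n, x n ≠ y n := by
      intro n e
      have := hfar n
      rw [e, dist_self] at this
      linarith
    obtain ⟨hx, hy⟩ := h x y hne ht
    obtain ⟨A, hA⟩ := hx f hf
    obtain ⟨B, hB⟩ := hy g hg
    have key : ∀ u : X → ℝ, UniformContinuous u →
        Filter.Tendsto (fun n => |u (x n) - u (y n)|) Filter.atTop (nhds 0) := by
      intro u hu
      rw [Metric.tendsto_atTop]
      intro e he
      obtain ⟨η, hη, K⟩ := Metric.uniformContinuous_iff.1 hu e he
      obtain ⟨N, hN⟩ := Filter.eventually_atTop.1 (ht.eventually (gt_mem_nhds hη))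
      exact ⟨N, fun n hn => by simpa [Real.dist_eq] using K (hN n hn)⟩
    have hlim := ((key g hg).const_mul A).add ((key f hf).const_mul B)
    simp only [mul_zero, add_zero] at hlim
    obtain ⟨n, hn⟩ := (hlim.eventually (gt_mem_nhds hε)).exists
    have h1 := hfar n
    rw [Real.dist_eq] at h1
    have e : f (x n) * g (x n) - f (y n) * g (y n) =
      f (x n) * (g (x n) - g (y n)) + g (y n) * (f (x n) - f (y n)) := by ring
    rw [e] at h1
    have h2 := abs_add_le (f (x n) * (g (x n) - g (y n))) (g (y n) * (f (x n) - f (y n)))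
    rw [abs_mul, abs_mul] at h2
    have h3 := mul_le_mul_of_nonneg_right (hA _ ⟨n, rfl⟩) (abs_nonneg (g (x n) - g (y n)))
    have h4 := mul_le_mul_of_nonneg_right (hB _ ⟨n, rfl⟩) (abs_nonneg (f (x n) - f (y n)))
    linarith
end

section
/- Let (X,d) be a metric space in which every Bourbaki bounded subset is totally bounded. If U(X) is a ring, then there exists a totally bounded set L ⊆ X such that for each ε > 0 the set X \ B(L,ε) is uniformly isolated. -/
def nearSet (X : Type*) [MetricSpace X] (n : ℕ) : Set X :=
  {x | ∃ y, y ≠ x ∧ dist y x < 1 / ((n : ℝ) + 1)}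

theorem nearSet_anti {X : Type*} [MetricSpace X] {m n : ℕ} (h : m ≤ n) :
    nearSet X n ⊆ nearSet X m := by
  rintro x ⟨y, hy, hd⟩
  exact ⟨y, hy, hd.trans_le (Nat.one_div_le_one_div h)⟩

/-- Bump-function argument: the ring property fails along a bad sequence. -/
theorem no_bad_seq {X : Type*} [MetricSpace X] (hring : IsRingUC X) (ε : ℝ) (hε : 0 < ε)
    (f : X → ℝ) (hf : UniformContinuous f) (x y : ℕ → X)
    (hsep : ∀ m n, m ≠ n → ε ≤ dist (x m) (x n))
    (hne : ∀ n, y n ≠ x n) (hd : ∀ n, dist (y n) (x n) < 1 / ((n : ℝ) + 1))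
    (hd2 : ∀ n, dist (y n) (x n) < ε / 2)
    (hbig : ∀ n, (2 : ℝ) ^ n ≤ |f (x n)|) : False := by
  have hr : ∀ n, 0 < dist (y n) (x n) := fun n => dist_pos.2 (hne n)
  let b : ℕ → X → ℝ := fun n z => (f (x n))⁻¹ * max 0 (1 - dist z (x n) / dist (y n) (x n))
  have hb0 : ∀ n z, dist (y n) (x n) ≤ dist z (x n) → b n z = 0 := by
    intro n z h
    have : 1 ≤ dist z (x n) / dist (y n) (x n) := (one_le_div (hr n)).2 h
    simp only [b]
    rw [max_eq_left (by linarith), mul_zero]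
  have hbound : ∀ n z, ‖b n z‖ ≤ (1 / 2 : ℝ) ^ n := by
    intro n z
    have h1 : |max 0 (1 - dist z (x n) / dist (y n) (x n))| ≤ 1 := by
      rw [abs_of_nonneg (le_max_left _ _)]
      apply max_le zero_le_one
      have : 0 ≤ dist z (x n) / dist (y n) (x n) := by positivity
      linarith
    have h2 : |(f (x n))⁻¹| ≤ (1 / 2 : ℝ) ^ n := by
      rw [abs_inv, one_div, inv_pow]
      exact inv_anti₀ (by positivity) (hbig n)
    simp only [b, Real.norm_eq_abs, abs_mul]
    calc _ ≤ (1 / 2 : ℝ) ^ n * 1 := mul_le_mul h2 h1 (abs_nonneg _) (by positivity)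
      _ = _ := mul_one _
  have hbuc : ∀ n, UniformContinuous (b n) := by
    intro n
    have h1 : UniformContinuous (fun z : X => dist z (x n)) :=
      uniformContinuous_id.dist uniformContinuous_const
    have h2 : LipschitzWith (Real.toNNReal |(f (x n))⁻¹| * (1 * Real.toNNReal |(dist (y n) (x n))⁻¹|))
        (fun t : ℝ => (f (x n))⁻¹ * max 0 (1 - t / dist (y n) (x n))) := by
      apply LipschitzWith.of_dist_le_mul
      intro s t
      simp only [NNReal.coe_mul, NNReal.coe_one, Real.coe_toNNReal _ (abs_nonneg _), Real.dist_eq]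
      rw [← mul_sub, abs_mul, mul_assoc]
      refine mul_le_mul_of_nonneg_left ?_ (abs_nonneg _)
      have := abs_max_sub_max_le_abs (1 - s / dist (y n) (x n)) (1 - t / dist (y n) (x n)) 0
      rw [max_comm, max_comm 0]
      refine this.trans (le_of_eq ?_)
      rw [one_mul, ← abs_mul, abs_sub_comm]
      have := hr n
      congr 1
      field_simp
      try ring
    exact h2.uniformContinuous.comp h1
  have hsum : Summable (fun n : ℕ => (1 / 2 : ℝ) ^ n) := summable_geometric_two
  let g : X → ℝ := fun z => ∑' n, b n z
  have hguc : UniformContinuous g := by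
    have ht := tendstoUniformly_tsum hsum hbound
    refine ht.uniformContinuous (Filter.Eventually.frequently (Filter.Eventually.of_forall ?_))
    intro s
    classical
    induction s using Finset.induction_on with
    | empty => simpa using uniformContinuous_const
    | insert a s ha ih =>
      simp only [Finset.sum_insert ha]
      exact (hbuc a).add ih
  have hother : ∀ n m, m ≠ n → b m (x n) = 0 ∧ b m (y n) = 0 := by
    intro n m hmn
    have h1 := hsep m n hmn
    have h2 := hd2 m
    have h3 := hd2 n
    have h4 := dist_triangle (x n) (y n) (x m)
    rw [dist_comm (x m)] at h1
    rw [dist_comm (x n) (y n)] at h4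
    exact ⟨hb0 _ _ (by linarith), hb0 _ _ (by linarith)⟩
  have hgx : ∀ n, f (x n) * g (x n) = 1 := by
    intro n
    have : g (x n) = b n (x n) := tsum_eq_single n (fun m hm => (hother n m hm).1)
    rw [this]
    have hfn : f (x n) ≠ 0 := by
      intro h0
      have := hbig n
      rw [h0, abs_zero] at this
      have : (0 : ℝ) < 2 ^ n := by positivity
      linarith
    simp [b, hfn]
  have hgy : ∀ n, f (y n) * g (y n) = 0 := by
    intro n
    have : g (y n) = b n (y n) := tsum_eq_single n (fun m hm => (hother n m hm).2)
    rw [this, hb0 n (y n) le_rfl, mul_zero]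
  obtain ⟨δ, hδ, H⟩ := Metric.uniformContinuous_iff.1 (hring f g hf hguc) 1 one_pos
  obtain ⟨n, hn⟩ := exists_nat_one_div_lt hδ
  have := H ((hd n).trans hn)
  simp only [hgx, hgy] at this
  norm_num [Real.dist_eq] at this

theorem key_cover {X : Type*} [MetricSpace X]
    (htb : ∀ A : Set X, BourbakiBounded A → TotallyBounded A)
    (hring : IsRingUC X) (ε : ℝ) (hε : 0 < ε) :
    ∃ n, ∃ F : Set X, F.Finite ∧ nearSet X n ⊆ ⋃ x ∈ F, Metric.ball x ε := by
  by_contra! hcon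
  obtain ⟨u, hu, hr⟩ := exists_seq_of_forall_finset_exists (α := ℕ × X)
    (fun p => p.2 ∈ nearSet X p.1) (fun p q => p.1 < q.1 ∧ ε ≤ dist q.2 p.2) (by
      intro s _
      classical
      have := hcon (s.sup Prod.fst + 1) (s.image Prod.snd) (Finset.finite_toSet _)
      rw [Set.not_subset] at this
      obtain ⟨z, hz, hz'⟩ := this
      refine ⟨(_, z), hz, fun p hp => ⟨Nat.lt_succ_of_le (Finset.le_sup (f := Prod.fst) hp), ?_⟩⟩
      by_contra! hlt
      exact hz' (Set.mem_biUnion (by simpa using ⟨p.1, hp⟩) (Metric.mem_ball.2 hlt)))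
  have hmono : StrictMono (fun n => (u n).1) := fun m n h => (hr m n h).1
  have hsep : ∀ m n, m ≠ n → ε ≤ dist (u m).2 (u n).2 := by
    intro m n hmn
    rcases lt_or_gt_of_ne hmn with h | h
    · rw [dist_comm]; exact (hr m n h).2
    · exact (hr n m h).2
  have hntb : ¬ TotallyBounded (Set.range fun n => (u n).2) := by
    intro h
    obtain ⟨t, ht, hc⟩ := Metric.totallyBounded_iff.1 h (ε / 2) (by linarith)
    have : ∀ n, ∃ z ∈ t, dist (u n).2 z < ε / 2 := by
      intro n
      simpa using hc ⟨n, rfl⟩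
    choose c hct hcd using this
    obtain ⟨m, -, n, -, hmn, he⟩ := Set.infinite_univ.exists_ne_map_eq_of_mapsTo
      (fun n _ => hct n : Set.MapsTo c Set.univ t) ht
    have h1 := hcd m
    have h2 := hcd n
    rw [he] at h1
    have := dist_triangle_right (u m).2 (u n).2 (c n)
    linarith [hsep m n hmn]
  have hnb : ¬ BourbakiBounded (Set.range fun n => (u n).2) := fun h => hntb (htb _ h)
  unfold BourbakiBounded at hnb
  push Not at hnb
  obtain ⟨f, hf, hunb⟩ := hnb
  have hfreq : ∀ M : ℝ, ∃ᶠ k in Filter.atTop, M ≤ |f (u k).2| := by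
    intro M
    rw [Filter.frequently_atTop]
    intro a
    obtain ⟨_, ⟨k, rfl⟩, hk⟩ := hunb (max M (∑ i ∈ Finset.range a, |f (u i).2|))
    refine ⟨k, ?_, (le_max_left _ _).trans hk.le⟩
    by_contra! hka
    have := Finset.single_le_sum (f := fun i => |f (u i).2|) (fun i _ => abs_nonneg _)
      (Finset.mem_range.2 hka)
    have h2 := (le_max_right _ _).trans_lt hk
    linarith
  obtain ⟨N, hN⟩ := exists_nat_one_div_lt (half_pos hε)
  have hfreq2 : ∀ n : ℕ, ∃ᶠ k in Filter.atTop, (2 : ℝ) ^ n ≤ |f (u k).2| ∧ N + n ≤ k :=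
    fun n => (hfreq _).and_eventually (Filter.eventually_ge_atTop _)
  obtain ⟨φ, hφ, hP⟩ := Filter.extraction_forall_of_frequently hfreq2
  have hA : ∀ n, (u (φ n)).2 ∈ nearSet X (N + n) := fun n =>
    nearSet_anti ((hP n).2.trans (hmono.id_le (φ n))) (hu (φ n))
  choose y hy hyd using hA
  refine no_bad_seq hring ε hε f hf (fun n => (u (φ n)).2) y
    (fun m n h => hsep _ _ (hφ.injective.ne h)) hy ?_ ?_ (fun n => (hP n).1)
  · intro n
    exact (hyd n).trans_le (Nat.one_div_le_one_div (Nat.le_add_left _ _))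
  · intro n
    exact ((hyd n).trans_le (Nat.one_div_le_one_div (Nat.le_add_right _ _))).trans hN

theorem stmt13 {X : Type*} [MetricSpace X]
    (htb : ∀ A : Set X, BourbakiBounded A → TotallyBounded A)
    (hring : IsRingUC X) :
    ∃ L : Set X, TotallyBounded L ∧
      ∀ ε > (0 : ℝ), UnifIsolated (Set.univ \ enl L ε) := by
  have hev : ∀ k : ℕ, ∀ᶠ n in Filter.atTop, ∃ F : Set X, F.Finite ∧
      nearSet X n ⊆ ⋃ x ∈ F, Metric.ball x (1 / ((k : ℝ) + 1)) := by
    intro k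
    obtain ⟨n, F, hF, hc⟩ := key_cover htb hring (1 / ((k : ℝ) + 1)) Nat.one_div_pos_of_nat
    filter_upwards [Filter.eventually_ge_atTop n] with m hm
    exact ⟨F, hF, (nearSet_anti hm).trans hc⟩
  obtain ⟨φ, hφ, hP⟩ := Filter.extraction_forall_of_eventually hev
  choose F hF hc using hP
  refine ⟨⋃ k, {z ∈ F k | ∃ a ∈ nearSet X (φ k), dist a z < 1 / ((k : ℝ) + 1)}, ?_, ?_⟩
  · rw [Metric.totallyBounded_iff]
    intro ε hε
    obtain ⟨k, hk⟩ := exists_nat_one_div_lt (half_pos hε)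
    refine ⟨⋃ j ∈ Set.Iic k, F j, (Set.finite_Iic k).biUnion (fun j _ => hF j), ?_⟩
    intro z hz
    obtain ⟨j, hzj, a, ha, haz⟩ := Set.mem_iUnion.1 hz
    rcases le_total j k with h | h
    · exact Set.mem_biUnion (Set.mem_biUnion (show j ∈ Set.Iic k from h) hzj)
        (Metric.mem_ball_self hε)
    · have ha' := hc k (nearSet_anti (hφ.monotone h) ha)
      simp only [Set.mem_iUnion, Metric.mem_ball] at ha'
      obtain ⟨w, hw, haw⟩ := ha'
      refine Set.mem_biUnion (Set.mem_biUnion (show k ∈ Set.Iic k from le_refl k) hw) ?_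
      rw [Metric.mem_ball]
      have h1 := dist_triangle_left z w a
      have h2 : (1 : ℝ) / ((j : ℝ) + 1) ≤ 1 / ((k : ℝ) + 1) := Nat.one_div_le_one_div h
      linarith
  · intro ε hε
    obtain ⟨k, hk⟩ := exists_nat_one_div_lt hε
    refine ⟨1 / ((φ k : ℝ) + 1), Nat.one_div_pos_of_nat, ?_⟩
    rintro x ⟨-, hx⟩
    have hxn : x ∉ nearSet X (φ k) := by
      intro hxn
      have h1 := hc k hxn
      simp only [Set.mem_iUnion, Metric.mem_ball] at h1
      obtain ⟨w, hw, hxw⟩ := h1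
      exact hx (Set.mem_biUnion (Set.mem_iUnion.2 ⟨k, hw, x, hxn, hxw⟩)
        (Metric.mem_ball.2 (hxw.trans hk)))
    ext y
    simp only [Metric.mem_ball, Set.mem_singleton_iff]
    constructor
    · intro h
      by_contra hne
      exact hxn ⟨y, hne, h⟩
    · rintro rfl
      rw [dist_self]
      exact Nat.one_div_pos_of_nat
end

section
/- For any metric space (X,d) the following are equivalent: (1) U(X) is a ring and every Bourbaki bounded subset of X is totally bounded; (2) there exists a totally bounded set L ⊆ X such that for each ε > 0 the set X \ B(L,ε) is uniformly isolated; (3) the completion of (X,d) is a UC-space. -/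
def TSet (X : Type*) [MetricSpace X] (δ : ℝ) : Set X := {x | ∃ y, y ≠ x ∧ dist y x < δ}

def CP (X : Type*) [MetricSpace X] : Prop :=
  ∀ ε > (0 : ℝ), ∃ δ > (0 : ℝ), ∃ t : Set X, t.Finite ∧ TSet X δ ⊆ ⋃ y ∈ t, Metric.ball y ε

def C2 (X : Type*) [MetricSpace X] : Prop :=
  ∃ L : Set X, TotallyBounded L ∧ ∀ ε > (0 : ℝ), UnifIsolated (Set.univ \ enl L ε)

theorem TSet_mono {X : Type*} [MetricSpace X] {a b : ℝ} (h : a ≤ b) : TSet X a ⊆ TSet X b := by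
  rintro x ⟨y, h1, h2⟩
  exact ⟨y, h1, h2.trans_le h⟩

theorem unifIso_iff {X : Type*} [MetricSpace X] (S : Set X) :
    UnifIsolated (Set.univ \ S) ↔ ∃ δ > (0 : ℝ), TSet X δ ⊆ S := by
  constructor
  · rintro ⟨δ, hδ, h⟩
    refine ⟨δ, hδ, ?_⟩
    rintro x ⟨y, h1, h2⟩
    by_contra hx
    have := h x ⟨trivial, hx⟩
    have h3 : y ∈ Metric.ball x δ := h2
    rw [this] at h3
    exact h1 h3
  · rintro ⟨δ, hδ, h⟩
    refine ⟨δ, hδ, ?_⟩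
    rintro x ⟨-, hx⟩
    ext y
    constructor
    · intro hy
      by_contra hne
      exact hx (h ⟨y, hne, hy⟩)
    · rintro rfl
      exact Metric.mem_ball_self hδ

theorem CP_of_C2 {X : Type*} [MetricSpace X] (h : C2 X) : CP X := by
  obtain ⟨L, hL, h⟩ := h
  intro ε hε
  obtain ⟨δ, hδ, h⟩ := (unifIso_iff _).1 (h (ε/2) (by positivity))
  obtain ⟨t, ht, hc⟩ := Metric.totallyBounded_iff.1 hL (ε/2) (by positivity)
  refine ⟨δ, hδ, t, ht, fun x hx => ?_⟩
  have h1 := h hx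
  simp only [enl, Set.mem_iUnion, Metric.mem_ball] at h1
  obtain ⟨l, hl, h1⟩ := h1
  have h2 := hc hl
  simp only [Set.mem_iUnion, Metric.mem_ball] at h2 ⊢
  obtain ⟨c, hct, h2⟩ := h2
  exact ⟨c, hct, by linarith [dist_triangle x l c]⟩

theorem net_inside {X : Type*} [MetricSpace X] {S t : Set X} {ε : ℝ} (ht : t.Finite)
    (h : S ⊆ ⋃ y ∈ t, Metric.ball y ε) :
    ∃ t' : Set X, t'.Finite ∧ t' ⊆ S ∧ S ⊆ ⋃ y ∈ t', Metric.ball y (2 * ε) := by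
  have : ∀ c : X, ∃ p : X, (∃ s ∈ S, dist s c < ε) → p ∈ S ∧ dist p c < ε := by
    intro c
    by_cases hc : ∃ s ∈ S, dist s c < ε
    · obtain ⟨s, h1, h2⟩ := hc
      exact ⟨s, fun _ => ⟨h1, h2⟩⟩
    · exact ⟨c, fun h => absurd h hc⟩
  choose g hg using this
  refine ⟨g '' {c ∈ t | ∃ s ∈ S, dist s c < ε}, (ht.subset (Set.sep_subset _ _)).image _, ?_, ?_⟩
  · rintro _ ⟨c, ⟨-, hc⟩, rfl⟩
    exact (hg c hc).1
  · intro s hs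
    have h2 := h hs
    simp only [Set.mem_iUnion, Metric.mem_ball] at h2
    obtain ⟨c, hct, h2⟩ := h2
    have h3 : ∃ s ∈ S, dist s c < ε := ⟨s, hs, h2⟩
    refine Set.mem_biUnion (Set.mem_image_of_mem g ⟨hct, h3⟩) ?_
    have := (hg c h3).2
    rw [Metric.mem_ball]
    linarith [dist_triangle_right s (g c) c]

theorem C2_of_CP {X : Type*} [MetricSpace X] (h : CP X) : C2 X := by
  have key : ∀ k : ℕ, ∃ δ > (0:ℝ), δ ≤ 1 / ((k:ℝ)+1) ∧ ∃ t : Set X, t.Finite ∧ t ⊆ TSet X δ ∧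
      TSet X δ ⊆ ⋃ y ∈ t, Metric.ball y (2 * (1 / ((k:ℝ)+1))) := by
    intro k
    obtain ⟨δ, hδ, t, ht, hc⟩ := h (1 / ((k:ℝ)+1)) (by positivity)
    refine ⟨min δ (1 / ((k:ℝ)+1)), lt_min hδ (by positivity), min_le_right _ _, ?_⟩
    exact net_inside ht ((TSet_mono (min_le_left _ _)).trans hc)
  choose δ hδ hδ' F hF hFs hFc using key
  have small : ∀ ε > (0:ℝ), ∃ k : ℕ, 2 * (1 / ((k:ℝ)+1)) < ε := by
    intro ε hε
    obtain ⟨k, hk⟩ := exists_nat_one_div_lt (half_pos hε)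
    exact ⟨k, by linarith⟩
  refine ⟨⋃ k, F k, ?_, ?_⟩
  · rw [Metric.totallyBounded_iff]
    intro ε hε
    obtain ⟨k, hk⟩ := small ε hε
    obtain ⟨N, hN⟩ := exists_nat_one_div_lt (hδ k)
    refine ⟨F k ∪ ⋃ j ∈ Set.Iio N, F j, (hF k).union ((Set.finite_Iio N).biUnion fun j _ => hF j), ?_⟩
    intro x hx
    obtain ⟨j, hj⟩ := Set.mem_iUnion.1 hx
    by_cases hjN : j < N
    · exact Set.mem_biUnion (Or.inr (Set.mem_biUnion hjN hj)) (Metric.mem_ball_self hε)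
    · have h1 : x ∈ TSet X (δ k) := by
        refine TSet_mono ?_ (hFs j hj)
        refine (hδ' j).trans (le_trans ?_ hN.le)
        exact Nat.one_div_le_one_div (not_lt.1 hjN)
      obtain ⟨c, hc, h2⟩ := Set.mem_iUnion₂.1 (hFc k h1)
      exact Set.mem_biUnion (Or.inl hc) (Metric.ball_subset_ball hk.le h2)
  · intro ε hε
    rw [unifIso_iff]
    obtain ⟨k, hk⟩ := small ε hε
    refine ⟨δ k, hδ k, fun x hx => ?_⟩
    obtain ⟨c, hc, h2⟩ := Set.mem_iUnion₂.1 (hFc k hx)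
    exact Set.mem_biUnion (Set.mem_iUnion.2 ⟨k, hc⟩) (Metric.ball_subset_ball hk.le h2)

theorem seq_of_not_CP {X : Type*} [MetricSpace X] (h : ¬ CP X) :
    ∃ ε > (0:ℝ), ∃ x y : ℕ → X, (∀ i j, i ≠ j → ε ≤ dist (x i) (x j)) ∧
      (∀ i, y i ≠ x i) ∧ (∀ i, dist (y i) (x i) < ε / 4) ∧
      (∀ i : ℕ, dist (y i) (x i) < 1 / ((i:ℝ)+1)) := by
  unfold CP at h
  push Not at h
  obtain ⟨ε, hε, h⟩ := h
  obtain ⟨f, hf1, hf2⟩ := exists_seq_of_forall_finset_exists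
    (fun p : ℕ × X => p.2 ∈ TSet X (min (1 / ((p.1:ℝ)+1)) (ε/4)))
    (fun p q => p.1 < q.1 ∧ ε ≤ dist p.2 q.2) (by
      intro s _
      have hs := h (min (1 / (((s.sup Prod.fst + 1 : ℕ):ℝ)+1)) (ε/4))
        (lt_min (by positivity) (by positivity)) (Prod.snd '' (s : Set (ℕ × X)))
        (s.finite_toSet.image _)
      obtain ⟨z, hz1, hz2⟩ := Set.not_subset.1 hs
      refine ⟨(s.sup Prod.fst + 1, z), hz1, fun p hp => ⟨?_, ?_⟩⟩
      · exact Nat.lt_succ_of_le (Finset.le_sup (f := Prod.fst) hp)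
      · by_contra hlt
        apply hz2
        refine Set.mem_biUnion (Set.mem_image_of_mem _ hp) ?_
        rw [Metric.mem_ball, dist_comm]
        exact not_le.1 hlt)
  have hmono : StrictMono (fun n => (f n).1) := fun m n hmn => (hf2 m n hmn).1
  choose y hy1 hy2 using hf1
  refine ⟨ε, hε, fun n => (f n).2, y, ?_, hy1, fun i => (hy2 i).trans_le (min_le_right _ _), ?_⟩
  · intro i j hij
    rcases lt_or_gt_of_ne hij with h | h
    · exact (hf2 _ _ h).2
    · rw [dist_comm]; exact (hf2 _ _ h).2
  · intro i
    refine ((hy2 i).trans_le (min_le_left _ _)).trans_le ?_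
    exact Nat.one_div_le_one_div (hmono.id_le i)

def C3 (X : Type*) [MetricSpace X] : Prop :=
  ∀ f : UniformSpace.Completion X → ℝ, Continuous f → UniformContinuous f

theorem closed_range_sep {Y : Type*} [MetricSpace Y] {ε : ℝ} (hε : 0 < ε) (x : ℕ → Y)
    (h : ∀ i j, i ≠ j → ε ≤ dist (x i) (x j)) : IsClosed (Set.range x) := by
  apply Metric.isClosed_of_pairwise_le_dist hε
  rintro _ ⟨i, rfl⟩ _ ⟨j, rfl⟩ hne
  exact h i j (fun e => hne (e ▸ rfl))

theorem CP_of_C3 {X : Type*} [MetricSpace X] (h : C3 X) : CP X := by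
  by_contra hn
  obtain ⟨ε, hε, x, y, hsep, hne, h4, hi⟩ := seq_of_not_CP hn
  have hA := closed_range_sep (Y := UniformSpace.Completion X) hε (fun i => (x i : UniformSpace.Completion X))
    (by simpa [UniformSpace.Completion.dist_eq] using hsep)
  have hB := closed_range_sep (Y := UniformSpace.Completion X) (half_pos hε)
    (fun i => (y i : UniformSpace.Completion X)) (by
      intro i j hij
      rw [UniformSpace.Completion.dist_eq]
      have := dist_triangle4 (x i) (y i) (y j) (x j)
      rw [dist_comm (x i)  (y i)] at this
      linarith [hsep i j hij, h4 i, h4 j])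
  have hd : Disjoint (Set.range fun i => (x i : UniformSpace.Completion X))
      (Set.range fun i => (y i : UniformSpace.Completion X)) := by
    rw [Set.disjoint_left]
    rintro _ ⟨i, rfl⟩ ⟨j, hj⟩
    have hj' : y j = x i := UniformSpace.Completion.coe_injective X hj
    by_cases hij : i = j
    · subst hij; exact hne _ hj'
    · have := hsep i j hij
      rw [← hj'] at this
      linarith [h4 j]
  obtain ⟨f, hf0, hf1, -⟩ := exists_continuous_zero_one_of_isClosed hA hB hd
  have hu := h f f.continuous
  rw [Metric.uniformContinuous_iff] at hu
  obtain ⟨δ, hδ, hu⟩ := hu 1 one_pos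
  obtain ⟨n, hn⟩ := exists_nat_one_div_lt hδ
  have h1 := @hu (y n) (x n) (by rw [UniformSpace.Completion.dist_eq]; exact (hi n).trans hn)
  rw [hf0 ⟨n, rfl⟩, hf1 ⟨n, rfl⟩] at h1
  simp at h1

theorem C3_of_C2 {X : Type*} [MetricSpace X] (h : C2 X) : C3 X := by
  obtain ⟨L, hL, h⟩ := h
  intro f hf
  set K : Set (UniformSpace.Completion X) := closure ((fun x : X => (x : UniformSpace.Completion X)) '' L)
    with hK
  have hKc : IsCompact K :=
    (hL.image (UniformSpace.Completion.uniformContinuous_coe X)).closure.isCompact_of_isClosed isClosed_closure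
  have hu : UniformContinuous (fun x : X => f (x : UniformSpace.Completion X)) := by
    rw [Metric.uniformContinuous_iff]
    intro ε hε
    have h1 := hKc.uniformContinuousAt_of_continuousAt f (fun a _ => hf.continuousAt)
      (Metric.dist_mem_uniformity (half_pos hε))
    obtain ⟨δ, hδ, h1⟩ := Metric.mem_uniformity_dist.1 h1
    obtain ⟨η, hη, h2⟩ := (unifIso_iff _).1 (h (δ/2) (by positivity))
    refine ⟨min η (δ/2), lt_min hη (by positivity), fun {x y} hxy => ?_⟩
    by_cases hne : x = y
    · subst hne; simpa using hε
    have hx : y ∈ TSet X η := ⟨x, hne, hxy.trans_le (min_le_left _ _)⟩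
    obtain ⟨l, hl, h3⟩ := Set.mem_iUnion₂.1 (h2 hx)
    rw [Metric.mem_ball] at h3
    have hlK : (l : UniformSpace.Completion X) ∈ K := subset_closure ⟨l, hl, rfl⟩
    have hxy2 := hxy.trans_le (min_le_right _ _)
    have e1 := @h1 l y (by rw [UniformSpace.Completion.dist_eq, dist_comm]; linarith) hlK
    have e2 := @h1 l x (by
      rw [UniformSpace.Completion.dist_eq, dist_comm]; linarith [dist_triangle x y l]) hlK
    simp only [Set.mem_ofPred_eq] at e1 e2
    linarith [dist_triangle_left (f x) (f y) (f l)]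
  have : f = UniformSpace.Completion.extension (fun x : X => f (x : UniformSpace.Completion X)) := by
    apply UniformSpace.Completion.ext hf UniformSpace.Completion.continuous_extension
    intro a
    rw [UniformSpace.Completion.extension_coe hu]
  rw [this]
  exact UniformSpace.Completion.uniformContinuous_extension

theorem ring_of_C3 {X : Type*} [MetricSpace X] (h : C3 X) : IsRingUC X := by
  intro f g hf hg
  have h1 := h (fun z => UniformSpace.Completion.extension f z * UniformSpace.Completion.extension g z)
    (UniformSpace.Completion.continuous_extension.mul UniformSpace.Completion.continuous_extension)
  have h2 := h1.comp (UniformSpace.Completion.uniformContinuous_coe X)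
  convert h2 using 2 with x
  simp [UniformSpace.Completion.extension_coe hf, UniformSpace.Completion.extension_coe hg]

theorem bb_of_CP {X : Type*} [MetricSpace X] (h : CP X) (A : Set X) (hA : BourbakiBounded A) :
    TotallyBounded A := by
  rw [Metric.totallyBounded_iff]
  intro ε hε
  obtain ⟨δ, hδ, t, ht, hc⟩ := h ε hε
  by_cases hfin : (A \ TSet X δ).Finite
  · refine ⟨t ∪ (A \ TSet X δ), ht.union hfin, fun x hx => ?_⟩
    by_cases hxT : x ∈ TSet X δ
    · obtain ⟨c, h1, h2⟩ := Set.mem_iUnion₂.1 (hc hxT)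
      exact Set.mem_biUnion (Or.inl h1) h2
    · exact Set.mem_biUnion (Or.inr ⟨hx, hxT⟩) (Metric.mem_ball_self hε)
  · exfalso
    have hinf : (A \ TSet X δ).Infinite := hfin
    let e := hinf.natEmbedding
    have hinj : Function.Injective (fun n => (e n : X)) := Subtype.val_injective.comp e.injective
    set f : X → ℝ := Function.extend (fun n => (e n : X)) (fun n => (n:ℝ)) 0 with hf
    have hf0 : ∀ x ∈ TSet X δ, f x = 0 := by
      intro x hx
      rw [hf, Function.extend_apply']
      · rfl
      · rintro ⟨n, rfl⟩
        exact (e n).2.2 hx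
    have hu : UniformContinuous f := by
      rw [Metric.uniformContinuous_iff]
      intro η hη
      refine ⟨δ, hδ, fun {x y} hxy => ?_⟩
      by_cases hne : x = y
      · subst hne; simpa using hη
      · rw [hf0 x ⟨y, Ne.symm hne, by rwa [dist_comm]⟩, hf0 y ⟨x, hne, hxy⟩]
        simpa using hη
    obtain ⟨M, hM⟩ := hA f hu
    obtain ⟨n, hn⟩ := exists_nat_gt M
    have h1 := hM (e n) (e n).2.1
    have h2 : f (e n) = n := hinj.extend_apply _ _ n
    rw [h2] at h1
    linarith [le_abs_self (n:ℝ)]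

theorem CP_of_1 {X : Type*} [MetricSpace X] (hr : IsRingUC X)
    (hbb : ∀ A : Set X, BourbakiBounded A → TotallyBounded A) : CP X := by
  by_contra hn
  obtain ⟨ε, hε, x, y, hsep, hne, h4, hi⟩ := seq_of_not_CP hn
  have hnb : ¬ BourbakiBounded (Set.range x) := by
    intro hb
    obtain ⟨t, ht, hc⟩ := Metric.totallyBounded_iff.1 (hbb _ hb) (ε/2) (by positivity)
    have : ∀ n, ∃ c : t, dist (x n) c < ε/2 := by
      intro n
      obtain ⟨c, h1, h2⟩ := Set.mem_iUnion₂.1 (hc ⟨n, rfl⟩)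
      exact ⟨⟨c, h1⟩, h2⟩
    choose c hcc using this
    have := ht.to_subtype
    obtain ⟨i, j, hij, he⟩ := Finite.exists_ne_map_eq_of_infinite c
    have e1 := hcc i
    have e2 := hcc j
    rw [he] at e1
    linarith [hsep i j hij, dist_triangle_right (x i) (x j) (c j)]
  unfold BourbakiBounded at hnb
  push Not at hnb
  obtain ⟨h, hh, hM⟩ := hnb
  have hfreq : ∀ k : ℕ, ∃ᶠ n in Filter.atTop, (2:ℝ)^k < |h (x n)| := by
    intro k
    rw [Filter.frequently_atTop]
    intro N
    obtain ⟨_, ⟨n, rfl⟩, hn⟩ := hM (2^k + ∑ j ∈ Finset.range N, |h (x j)|)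
    have hs : 0 ≤ ∑ j ∈ Finset.range N, |h (x j)| := Finset.sum_nonneg fun _ _ => abs_nonneg _
    refine ⟨n, ?_, by linarith⟩
    by_contra hlt
    have := Finset.single_le_sum (f := fun j => |h (x j)|) (fun j _ => abs_nonneg _)
      (Finset.mem_range.2 (not_le.1 hlt))
    have h2 : (0:ℝ) < 2^k := by positivity
    linarith
  obtain ⟨φ, hφ, hbig⟩ := Filter.extraction_forall_of_frequently hfreq
  let r : ℕ → ℝ := fun k => dist (y (φ k)) (x (φ k))
  have hr0 : ∀ k, 0 < r k := fun k => dist_pos.2 (hne _)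
  let b : ℕ → X → ℝ := fun k z => (1/2)^k * max 0 (1 - dist z (x (φ k)) / r k)
  have hb0 : ∀ k z, 0 ≤ b k z := fun k z => by positivity
  have hb1 : ∀ k z, b k z ≤ (1/2)^k := fun k z => by
    apply mul_le_of_le_one_right (by positivity)
    apply max_le zero_le_one
    have : 0 ≤ dist z (x (φ k)) / r k := div_nonneg dist_nonneg (hr0 k).le
    linarith
  have hbu : ∀ k, UniformContinuous (b k) := by
    intro k
    have hl : LipschitzWith (Real.toNNReal ((1/2)^k * (1 / r k))) (b k) := by
      apply LipschitzWith.of_dist_le_mul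
      intro z w
      have hrk := hr0 k
      rw [Real.coe_toNNReal _ (by positivity), Real.dist_eq]
      simp only [b]
      rw [← mul_sub, abs_mul, abs_of_pos (by positivity : (0:ℝ) < (1/2)^k), mul_assoc]
      gcongr
      refine (abs_max_sub_max_le_max _ _ _ _).trans ?_
      rw [sub_self, abs_zero, max_eq_right (abs_nonneg _)]
      have : 1 - dist z (x (φ k)) / r k - (1 - dist w (x (φ k)) / r k)
        = 1 / r k * (dist w (x (φ k)) - dist z (x (φ k))) := by ring
      rw [this, abs_mul, abs_of_pos (by positivity)]
      gcongr
      rw [dist_comm z w]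
      exact abs_dist_sub_le _ _ _
    exact hl.uniformContinuous
  have hgeo : Summable (fun k : ℕ => ((1:ℝ)/2)^k) := summable_geometric_two
  have hsum : ∀ z, Summable (fun k => b k z) := fun z =>
    Summable.of_nonneg_of_le (fun k => hb0 k z) (fun k => hb1 k z) hgeo
  have hF : UniformContinuous (fun z => ∑' k, b k z) := by
    have ht := tendstoUniformly_tsum (f := b) hgeo (fun k z => by
      rw [Real.norm_eq_abs, abs_of_nonneg (hb0 k z)]; exact hb1 k z)
    refine ht.uniformContinuous (Filter.Frequently.of_forall fun s => ?_)
    induction s using Finset.induction_on with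
    | empty => simpa using uniformContinuous_const
    | insert a s ha ih =>
      simp only [Finset.sum_insert ha]
      exact (hbu a).add ih
  have hp := hr _ h hF hh
  rw [Metric.uniformContinuous_iff] at hp
  obtain ⟨δ, hδ, hp⟩ := hp 1 one_pos
  obtain ⟨n, hn⟩ := exists_nat_one_div_lt hδ
  have hd : dist (y (φ n)) (x (φ n)) < δ :=
    ((hi (φ n)).trans_le (Nat.one_div_le_one_div (hφ.id_le n))).trans hn
  have h1 := hp hd
  have hy0 : ∑' k, b k (y (φ n)) = 0 := by
    have : ∀ k, b k (y (φ n)) = 0 := by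
      intro k
      have : 1 ≤ dist (y (φ n)) (x (φ k)) / r k := by
        rw [one_le_div (hr0 k)]
        by_cases hk : k = n
        · subst hk; exact le_rfl
        · have e1 := hsep (φ n) (φ k) (fun e => hk (hφ.injective e).symm)
          have e2 := h4 (φ n)
          have e3 : r k < ε/4 := h4 (φ k)
          linarith [dist_triangle_left (x (φ n)) (x (φ k)) (y (φ n))]
      simp only [b]
      rw [max_eq_left (by linarith), mul_zero]
    simp [this]
  have hx0 : (1/2:ℝ)^n ≤ ∑' k, b k (x (φ n)) := by
    have e : b n (x (φ n)) = (1/2)^n := by simp [b]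
    rw [← e]
    exact (hsum _).le_tsum n (fun k _ => hb0 k _)
  simp only [hy0, zero_mul, dist_zero_left, norm_mul, Real.norm_eq_abs] at h1
  have h5 := hbig n
  have h6 : (1:ℝ) = (1/2)^n * 2^n := by rw [← mul_pow]; norm_num
  have h7 : (1/2:ℝ)^n * 2^n ≤ |∑' k, b k (x (φ n))| * |h (x (φ n))| :=
    mul_le_mul (hx0.trans (le_abs_self _)) h5.le (by positivity) (abs_nonneg _)
  linarith

theorem stmt14 {X : Type*} [MetricSpace X] :
    List.TFAE
      [IsRingUC X ∧ ∀ A : Set X, BourbakiBounded A → TotallyBounded A,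
       ∃ L : Set X, TotallyBounded L ∧
         ∀ ε > (0 : ℝ), UnifIsolated (Set.univ \ enl L ε),
       ∀ f : UniformSpace.Completion X → ℝ, Continuous f → UniformContinuous f] := by
  tfae_have 1 → 2 := fun h => C2_of_CP (CP_of_1 h.1 h.2)
  tfae_have 2 → 3 := fun h => C3_of_C2 h
  tfae_have 3 → 1 := fun h => ⟨ring_of_C3 h, bb_of_CP (CP_of_C3 h)⟩
  tfae_finish
end

section
/- A metric space (Y,d) is a UC-space if and only if there exists a compact set K ⊆ Y such that for every ε > 0 the set Y \ B(K,ε) is uniformly isolated. -/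
open Filter Topology in
theorem uc_cluster {Y : Type*} [MetricSpace Y]
    (H : ∀ f : Y → ℝ, Continuous f → UniformContinuous f)
    (x y : ℕ → Y) (hne : ∀ n, x n ≠ y n)
    (hd : ∀ n : ℕ, dist (y n) (x n) < 1 / ((n : ℝ) + 1)) :
    ∃ a, ¬ IsOpen ({a} : Set Y) ∧ MapClusterPt a atTop x := by
  have ht : ∀ δ > (0 : ℝ), ∀ᶠ n in atTop, dist (y n) (x n) < δ := by
    intro δ hδ
    have h := (tendsto_one_div_add_atTop_nhds_zero_nat (𝕜 := ℝ)).eventually (gt_mem_nhds hδ)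
    filter_upwards [h] with n hn using (hd n).trans hn
  have key : ∃ a, MapClusterPt a atTop x := by
    by_contra! hno
    have hlf : LocallyFinite (fun n => ({x n, y n} : Set Y)) := by
      intro p
      have h1 := hno p
      rw [Metric.nhds_basis_ball.mapClusterPt_iff_frequently] at h1
      push Not at h1
      obtain ⟨δ, hδ, h2⟩ := h1
      refine ⟨Metric.ball p (δ / 2), Metric.ball_mem_nhds _ (by positivity), ?_⟩
      have h3 := h2.and (ht (δ / 2) (by positivity))
      obtain ⟨N, hN⟩ := eventually_atTop.1 h3
      refine (Set.finite_lt_nat N).subset ?_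
      rintro n ⟨z, hz, hzp⟩
      by_contra hn
      obtain ⟨h4, h5⟩ := hN n (not_lt.1 hn)
      apply h4
      rw [Metric.mem_ball] at *
      rcases hz with rfl | hz
      · linarith
      · rw [Set.mem_singleton_iff] at hz
        subst hz
        have := dist_triangle_left (x n) p (y n)
        linarith
    have hcl : ∀ S : Set Y, S ⊆ (⋃ n, ({x n, y n} : Set Y)) → IsClosed S := by
      intro S hS
      have : S = ⋃ n, (({x n, y n} : Set Y) ∩ S) := by
        rw [← Set.iUnion_inter]; exact (Set.inter_eq_right.2 hS).symm
      rw [this]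
      exact (hlf.subset fun n => Set.inter_subset_left).isClosed_iUnion
        fun n => ((Set.toFinite ({x n, y n} : Set Y)).subset Set.inter_subset_left).isClosed
    set D : Set Y := ⋃ n, ({x n, y n} : Set Y) with hD
    have hDc : IsClosed D := hcl D subset_rfl
    have hdisc : DiscreteTopology D := by
      rw [discreteTopology_iff_forall_isClosed]
      intro S
      rw [hDc.isClosedEmbedding_subtypeVal.isClosed_iff_image_isClosed]
      exact hcl _ (by rintro _ ⟨z, _, rfl⟩; exact z.2)
    have hcount : D.Countable := Set.countable_iUnion fun n => (Set.toFinite _).countable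
    have := hcount.to_subtype
    obtain ⟨g, hg⟩ := Countable.exists_injective_nat D
    let G : C(D, ℝ) := ⟨fun d => (g d : ℝ), continuous_of_discreteTopology⟩
    obtain ⟨F, hF⟩ := G.exists_restrict_eq hDc
    have hFv : ∀ d : D, F d = (g d : ℝ) := fun d => by
      have := DFunLike.congr_fun hF d
      simpa [G] using this
    have hu := Metric.uniformContinuous_iff.1 (H F F.continuous) 1 one_pos
    obtain ⟨δ, hδ, hu⟩ := hu
    obtain ⟨n, hn⟩ := (ht δ hδ).exists
    have h6 := hu hn
    have hx : x n ∈ D := Set.mem_iUnion.2 ⟨n, by simp⟩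
    have hy : y n ∈ D := Set.mem_iUnion.2 ⟨n, by simp⟩
    have e1 := hFv ⟨x n, hx⟩
    have e2 := hFv ⟨y n, hy⟩
    simp only at e1 e2
    rw [e1, e2, Nat.dist_cast_real] at h6
    have h7 : g ⟨y n, hy⟩ = g ⟨x n, hx⟩ := by
      by_contra hc
      exact absurd (Nat.pairwise_one_le_dist hc) (not_le.2 h6)
    exact hne n (Subtype.mk.inj (hg h7)).symm
  obtain ⟨a, ha⟩ := key
  refine ⟨a, fun hopen => ?_, ha⟩
  obtain ⟨δ, hδ, hb⟩ := Metric.isOpen_iff.1 hopen a rfl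
  have h1 := mapClusterPt_iff_frequently.1 ha {a} (hopen.mem_nhds rfl)
  obtain ⟨n, hn, hn'⟩ := (h1.and_eventually (ht δ hδ)).exists
  rw [Set.mem_singleton_iff] at hn
  rw [hn] at hn'
  exact hne n (hn.trans (hb hn').symm)

open Filter Topology in
theorem stmt15 {Y : Type*} [MetricSpace Y] :
    (∀ f : Y → ℝ, Continuous f → UniformContinuous f) ↔
      ∃ K : Set Y, IsCompact K ∧
        ∀ ε > (0 : ℝ), UnifIsolated (Set.univ \ enl K ε) := by
  have aux : ∀ (p : Y) (r : ℝ), 0 < r → Metric.ball p r ≠ {p} → ∃ q, p ≠ q ∧ dist q p < r := by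
    intro p r hr h
    by_contra! hc
    apply h
    ext q
    constructor
    · intro hq
      by_contra hne
      exact absurd hq (not_lt.2 (hc q (fun h => hne h.symm)))
    · rintro rfl; exact Metric.mem_ball_self hr
  constructor
  · intro H
    refine ⟨{p | ¬ IsOpen ({p} : Set Y)}, ?_, ?_⟩
    · apply IsSeqCompact.isCompact
      intro x hx
      have : ∀ n : ℕ, ∃ q, x n ≠ q ∧ dist q (x n) < 1 / ((n : ℝ) + 1) := fun n =>
        aux _ _ (by positivity) (fun h => hx n (h ▸ Metric.isOpen_ball))
      choose y hy1 hy2 using this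
      obtain ⟨a, ha, hc⟩ := uc_cluster H x y hy1 hy2
      exact ⟨a, ha, TopologicalSpace.FirstCountableTopology.tendsto_subseq hc⟩
    · intro ε hε
      by_contra hU
      unfold UnifIsolated at hU
      push Not at hU
      have : ∀ n : ℕ, ∃ p q : Y, p ∉ enl {p | ¬ IsOpen ({p} : Set Y)} ε ∧ p ≠ q ∧
          dist q p < 1 / ((n : ℝ) + 1) := by
        intro n
        obtain ⟨p, hp, hb⟩ := hU (1 / ((n : ℝ) + 1)) (by positivity)
        obtain ⟨q, hq⟩ := aux p _ (by positivity) hb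
        exact ⟨p, q, hp.2, hq⟩
      choose x y h0 h1 h2 using this
      obtain ⟨a, ha, hc⟩ := uc_cluster H x y h1 h2
      obtain ⟨n, hn⟩ := (mapClusterPt_iff_frequently.1 hc _ (Metric.ball_mem_nhds a hε)).exists
      exact h0 n (Set.mem_biUnion (show a ∈ {p | ¬ IsOpen ({p} : Set Y)} from ha) hn)
  · rintro ⟨K, hK, hiso⟩ f hf
    rw [Metric.uniformContinuous_iff]
    intro ε hε
    have h := hK.uniformContinuousAt_of_continuousAt f (fun a _ => hf.continuousAt)
      (Metric.dist_mem_uniformity (half_pos hε))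
    obtain ⟨δ, hδ, hδ'⟩ := Metric.mem_uniformity_dist.1 h
    obtain ⟨η, hη, hi⟩ := hiso (δ / 2) (by positivity)
    refine ⟨min η (δ / 2), by positivity, fun a b hab => ?_⟩
    obtain ⟨hab1, hab2⟩ := lt_min_iff.1 hab
    by_cases ha : a ∈ enl K (δ / 2)
    · obtain ⟨z, hz, haz⟩ := Set.mem_iUnion₂.1 ha
      rw [Metric.mem_ball] at haz
      have t := dist_triangle_left z b a
      have e1 : dist (f z) (f a) < ε / 2 := hδ' (by rw [dist_comm]; linarith) hz
      have e2 : dist (f z) (f b) < ε / 2 := hδ' (by linarith) hz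
      have := dist_triangle_left (f a) (f b) (f z)
      linarith
    · have hb : b ∈ Metric.ball a η := by rwa [Metric.mem_ball, dist_comm]
      rw [hi a ⟨trivial, ha⟩, Set.mem_singleton_iff] at hb
      subst hb
      simpa using hε
end

section
/- Let (X,d) be a metric space, L a Bourbaki bounded subset of X, and M ⊆ X with L ⊆ M. If X \ M is uniformly isolated in X, then L is Bourbaki bounded in the metric subspace (M,d), that is, every uniformly continuous function g : M → ℝ is bounded on L. -/
theorem stmt16 {X : Type*} [MetricSpace X] (L M : Set X)
    (hLbb : BourbakiBounded L) (hLM : L ⊆ M)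
    (hiso : UnifIsolated (Set.univ \ M)) :
    ∀ g : M → ℝ, UniformContinuous g →
      ∃ C : ℝ, ∀ x : M, (x : X) ∈ L → |g x| ≤ C := by
  classical
  intro g hg
  obtain ⟨ε, hε, hiso⟩ := hiso
  have hf : UniformContinuous (fun x : X => if h : x ∈ M then g ⟨x, h⟩ else 0) := by
    rw [Metric.uniformContinuous_iff] at hg ⊢
    intro η hη
    obtain ⟨δ, hδ, hd⟩ := hg η hη
    refine ⟨min δ ε, lt_min hδ hε, ?_⟩
    intro a b hab
    have h1 := lt_of_lt_of_le hab (min_le_left _ _)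
    have h2 := lt_of_lt_of_le hab (min_le_right _ _)
    by_cases hE : a = b
    · subst hE
      simpa using hη
    have ha : a ∈ M := by
      by_contra ha
      have h3 : b ∈ Metric.ball a ε := by
        rw [Metric.mem_ball, dist_comm]
        exact h2
      rw [hiso a ⟨Set.mem_univ _, ha⟩] at h3
      exact hE h3.symm
    have hb : b ∈ M := by
      by_contra hb
      have h3 : a ∈ Metric.ball b ε := h2
      rw [hiso b ⟨Set.mem_univ _, hb⟩] at h3
      exact hE h3
    simp only [ha, hb, dif_pos]
    exact hd h1
  obtain ⟨C, hC⟩ := hLbb _ hf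
  refine ⟨C, fun x hx => ?_⟩
  have := hC x hx
  simpa using this
end

section
/- Let (X,d) be a metric space and let L ⊆ X be nonempty. Define δ_L on X by δ_L(x,y) = d(x,y) + max{d(x,L), d(y,L)} for x ≠ y and δ_L(x,x) = 0, where d(x,L) = inf{d(x,z) : z ∈ L}; then δ_L is a metric on X. For every η > 0, the set X \ B_{δ_L}(L,η) is uniformly η/2-isolated in (X,δ_L), i.e., for every x ∉ B_{δ_L}(L,η) and every y ∈ X with y ≠ x one has δ_L(x,y) ≥ η/2; here B_{δ_L}(L,η) = {x ∈ X : δ_L(x,z) < η for some z ∈ L}. -/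
open Classical in
/-- The metric `δ_L(x,y) = d(x,y) + max{d(x,L), d(y,L)}` for `x ≠ y`, and
`δ_L(x,x) = 0`. -/
noncomputable def deltaL {X : Type*} [MetricSpace X] (L : Set X) (x y : X) : ℝ :=
  if x = y then 0 else dist x y + max (Metric.infDist x L) (Metric.infDist y L)

theorem stmt17 {X : Type*} [MetricSpace X] (L : Set X) (hL : L.Nonempty) :
    ((∀ x : X, deltaL L x x = 0) ∧
     (∀ x y : X, deltaL L x y = 0 → x = y) ∧
     (∀ x y : X, deltaL L x y = deltaL L y x) ∧
     (∀ x y z : X, deltaL L x z ≤ deltaL L x y + deltaL L y z)) ∧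
    (∀ η > (0 : ℝ), ∀ x : X, x ∉ {w : X | ∃ z ∈ L, deltaL L w z < η} →
      ∀ y : X, y ≠ x → η / 2 ≤ deltaL L x y) := by
  have hn : ∀ x : X, 0 ≤ Metric.infDist x L := fun x => Metric.infDist_nonneg
  have hs : ∀ x : X, deltaL L x x = 0 := fun x => by simp [deltaL]
  have hne : ∀ x y : X, x ≠ y →
      deltaL L x y = dist x y + max (Metric.infDist x L) (Metric.infDist y L) :=
    fun x y h => by simp [deltaL, h]
  refine ⟨⟨hs, ?_, ?_, ?_⟩, ?_⟩
  · intro x y h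
    by_contra hxy
    rw [hne x y hxy] at h
    have h1 := dist_pos.2 hxy
    have h2 := le_max_left (Metric.infDist x L) (Metric.infDist y L)
    linarith [hn x]
  · intro x y
    by_cases h : x = y
    · rw [h]
    · rw [hne x y h, hne y x (Ne.symm h), dist_comm, max_comm]
  · intro x y z
    by_cases hxy : x = y
    · subst hxy; simp [hs]
    by_cases hyz : y = z
    · subst hyz; simp [hs]
    have h1 := le_max_left (Metric.infDist x L) (Metric.infDist y L)
    have h2 := le_max_right (Metric.infDist y L) (Metric.infDist z L)
    have h3 := le_max_right (Metric.infDist x L) (Metric.infDist y L)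
    have h4 := le_max_left (Metric.infDist y L) (Metric.infDist z L)
    have h5 := dist_triangle x y z
    have d1 := dist_nonneg (x := x) (y := y)
    have d2 := dist_nonneg (x := y) (y := z)
    rw [hne x y hxy, hne y z hyz]
    by_cases hxz : x = z
    · subst hxz; rw [hs]; linarith [hn x, hn y]
    rw [hne x z hxz]
    have : max (Metric.infDist x L) (Metric.infDist z L) ≤
        max (Metric.infDist x L) (Metric.infDist y L) +
        max (Metric.infDist y L) (Metric.infDist z L) :=
      max_le (by linarith [hn y]) (by linarith [hn y])
    linarith
  · intro η hη x hx y hyx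
    have key : η / 2 ≤ Metric.infDist x L := by
      by_contra hlt
      push Not at hlt
      obtain ⟨z, hz, hd⟩ := (Metric.infDist_lt_iff hL).1 hlt
      apply hx
      refine ⟨z, hz, ?_⟩
      by_cases h : x = z
      · subst h; rw [hs]; exact hη
      · rw [hne x z h, Metric.infDist_zero_of_mem hz, max_eq_left (hn x)]
        linarith
    rw [hne x y (Ne.symm hyx)]
    have h1 := le_max_left (Metric.infDist x L) (Metric.infDist y L)
    linarith [dist_nonneg (x := x) (y := y)]
end

section
/- Let (X,d) be a metric space and let L ⊆ X be nonempty, and let δ_L be the metric defined by δ_L(x,y) = d(x,y) + max{d(x,L), d(y,L)} for x ≠ y and δ_L(x,x) = 0. Then the following are equivalent: (a) for every ε > 0 the set X \ B_d(L,ε) is uniformly isolated in (X,d); (b) d and δ_L are uniformly equivalent on X, i.e., the identity maps (X,d) → (X,δ_L) and (X,δ_L) → (X,d) are both uniformly continuous. -/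
theorem mem_enl_iff_aux {X : Type*} [MetricSpace X] (L : Set X) (hL : L.Nonempty) (ε : ℝ) (x : X) :
    x ∈ enl L ε ↔ Metric.infDist x L < ε := by
  rw [Metric.infDist_lt_iff hL]
  simp [enl]

theorem stmt18 {X : Type*} [MetricSpace X] (L : Set X) (hL : L.Nonempty) :
    (∀ ε > (0 : ℝ), UnifIsolated (Set.univ \ enl L ε)) ↔
      ((∀ ε > (0 : ℝ), ∃ η > (0 : ℝ), ∀ x y : X, dist x y < η → deltaL L x y < ε) ∧
       (∀ ε > (0 : ℝ), ∃ η > (0 : ℝ), ∀ x y : X, deltaL L x y < η → dist x y < ε)) := by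
  constructor
  · intro h
    refine ⟨fun ε hε => ?_, fun ε hε => ⟨ε, hε, fun x y hxy => ?_⟩⟩
    · obtain ⟨η, hη, H⟩ := h (ε / 2) (by linarith)
      have key : ∀ x y : X, dist x y < η → x ≠ y → Metric.infDist x L < ε / 2 := by
        intro x y hxy hne
        by_contra hc
        have hx : x ∈ Set.univ \ enl L (ε / 2) :=
          ⟨Set.mem_univ _, fun hm => hc ((mem_enl_iff_aux L hL _ _).1 hm)⟩
        have hy : y ∈ Metric.ball x η := by rwa [Metric.mem_ball, dist_comm]
        rw [H x hx] at hy
        exact hne (Set.mem_singleton_iff.1 hy).symm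
      refine ⟨min η (ε / 2), lt_min hη (by linarith), fun x y hxy => ?_⟩
      unfold deltaL
      split_ifs with hxe
      · exact hε
      · have h1 := lt_of_lt_of_le hxy (min_le_left _ _)
        have h2 := lt_of_lt_of_le hxy (min_le_right _ _)
        have h3 := max_lt (key x y h1 hxe) (key y x (by rwa [dist_comm]) (Ne.symm hxe))
        linarith
    · unfold deltaL at hxy
      split_ifs at hxy with hxe
      · subst hxe; simpa using hε
      · have h1 := le_max_left (Metric.infDist x L) (Metric.infDist y L)
        have h2 := Metric.infDist_nonneg (x := x) (s := L)
        linarith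
  · rintro ⟨h, -⟩ ε hε
    obtain ⟨η, hη, H⟩ := h ε hε
    refine ⟨η, hη, fun x hx => ?_⟩
    ext y
    rw [Metric.mem_ball, Set.mem_singleton_iff]
    constructor
    · intro hy
      by_contra hne
      have h1 := H y x hy
      unfold deltaL at h1
      rw [if_neg hne] at h1
      have h2 := le_max_right (Metric.infDist y L) (Metric.infDist x L)
      have h3 : 0 ≤ dist y x := dist_nonneg
      exact hx.2 ((mem_enl_iff_aux L hL _ _).2 (by linarith))
    · rintro rfl; simpa using hη
end

section
/- Let (X,d) be a metric space whose set X' of limit points is nonempty, and let δ = δ_{X'} be the metric defined by δ(x,y) = d(x,y) + max{d(x,X'), d(y,X')} for x ≠ y and δ(x,x) = 0. Then the pointwise product of any two δ-uniformly continuous functions X → ℝ is δ-uniformly continuous if and only if the metric subspace (X',d) is Bourbaki bounded in itself, i.e., every uniformly continuous function g : X' → ℝ is bounded. -/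
/-- `f : X → ℝ` is uniformly continuous with respect to the metric `δ_L`. -/
def DeltaUC {X : Type*} [MetricSpace X] (L : Set X) (f : X → ℝ) : Prop :=
  ∀ ε > (0 : ℝ), ∃ η > (0 : ℝ), ∀ x y : X, deltaL L x y < η → |f x - f y| < ε

/-- The set of limit (non-isolated) points of `X`. -/
def limitPoints (X : Type*) [MetricSpace X] : Set X :=
  {x : X | x ∈ closure ({x}ᶜ : Set X)}

lemma dist_le_deltaL {X : Type*} [MetricSpace X] (L : Set X) (x y : X) :
    dist x y ≤ deltaL L x y := by
  unfold deltaL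
  split_ifs with h
  · simp [h]
  · have : 0 ≤ max (Metric.infDist x L) (Metric.infDist y L) :=
      le_max_of_le_left Metric.infDist_nonneg
    linarith

lemma deltaL_le_two {X : Type*} [MetricSpace X] (L : Set X) (x y : X) (hy : y ∈ L) :
    deltaL L x y ≤ 2 * dist x y := by
  unfold deltaL
  split_ifs with h
  · simp [h]
  · have h1 : Metric.infDist x L ≤ dist x y := Metric.infDist_le_dist_of_mem hy
    have h2 : Metric.infDist y L = 0 := Metric.infDist_zero_of_mem hy
    have : max (Metric.infDist x L) (Metric.infDist y L) ≤ dist x y := by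
      rw [h2]; exact max_le h1 dist_nonneg
    linarith

lemma infDist_le_deltaL {X : Type*} [MetricSpace X] (L : Set X) (x y : X) (h : x ≠ y) :
    Metric.infDist x L ≤ deltaL L x y ∧ Metric.infDist y L ≤ deltaL L x y := by
  unfold deltaL
  rw [if_neg h]
  have := le_max_left (Metric.infDist x L) (Metric.infDist y L)
  have := le_max_right (Metric.infDist x L) (Metric.infDist y L)
  have := @dist_nonneg _ _ x y
  constructor <;> linarith

/-- extension of a uniformly continuous function -/
lemma exists_ext {X : Type*} [MetricSpace X] (L : Set X) (hL : L.Nonempty) (hc : IsClosed L)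
    (g : L → ℝ) (hg : UniformContinuous g) :
    ∃ G : X → ℝ, DeltaUC L G ∧ ∀ z : L, G z = g z := by
  have hr : ∀ x : X, ∃ z : L, dist x z ≤ 2 * Metric.infDist x L := by
    intro x
    by_cases hx : x ∈ L
    · exact ⟨⟨x, hx⟩, by simp [Metric.infDist_nonneg]⟩
    · have hpos : 0 < Metric.infDist x L := (hc.notMem_iff_infDist_pos hL).1 hx
      obtain ⟨z, hz, hd⟩ := (Metric.infDist_lt_iff hL).1
        (show Metric.infDist x L < 2 * Metric.infDist x L by linarith)
      exact ⟨⟨z, hz⟩, hd.le⟩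
  choose r hr using hr
  refine ⟨fun x => g (r x), ?_, ?_⟩
  · intro ε hε
    obtain ⟨η, hη, H⟩ := Metric.uniformContinuous_iff.1 hg ε hε
    refine ⟨η / 5, by positivity, fun x y hxy => ?_⟩
    by_cases h : x = y
    · simp [h, hε]
    have := H (a := r x) (b := r y) (by
      obtain ⟨h1, h2⟩ := infDist_le_deltaL L x y h
      have h3 := dist_le_deltaL L x y
      have h4 := hr x
      have h5 := hr y
      rw [Subtype.dist_eq]
      have h6 := dist_triangle4 (r x : X) x y (r y)
      rw [dist_comm (r x : X) x] at h6
      linarith)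
    rwa [Real.dist_eq] at this
  · intro z
    have : r z = z := by
      have h := hr z
      rw [Metric.infDist_zero_of_mem z.2, mul_zero] at h
      exact (Subtype.ext (dist_le_zero.1 h)).symm
    simp [this]

lemma DeltaUC.bdd_near {X : Type*} [MetricSpace X] {L : Set X} (hL : L.Nonempty)
    (hb : ∀ g : L → ℝ, UniformContinuous g → ∃ M : ℝ, ∀ x, |g x| ≤ M)
    {f : X → ℝ} (hf : DeltaUC L f) :
    ∃ M > 0, ∃ η > 0, ∀ x, Metric.infDist x L < η → |f x| ≤ M := by
  obtain ⟨M, hM⟩ := hb (fun z => f z) (by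
    rw [Metric.uniformContinuous_iff]
    intro ε hε
    obtain ⟨η, hη, H⟩ := hf ε hε
    refine ⟨η / 2, by positivity, fun a b hab => ?_⟩
    rw [Real.dist_eq]
    apply H
    have := deltaL_le_two L a b b.2
    rw [Subtype.dist_eq] at hab
    linarith)
  obtain ⟨η, hη, H⟩ := hf 1 one_pos
  refine ⟨|M| + 1, by positivity, η / 2, by positivity, fun x hx => ?_⟩
  obtain ⟨z, hz, hd⟩ := (Metric.infDist_lt_iff hL).1 hx
  have h1 := H x z (by have := deltaL_le_two L x z hz; linarith)
  have h2 := hM ⟨z, hz⟩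
  have h3 := abs_sub_abs_le_abs_sub (f x) (f z)
  have h4 := le_abs_self M
  simp only at h2
  linarith

lemma limitPoints_closed (X : Type*) [MetricSpace X] : IsClosed (limitPoints X) := by
  refine isClosed_of_closure_subset fun x hx => ?_
  by_cases h : x ∈ limitPoints X
  · exact h
  · refine closure_mono ?_ hx
    rintro z hz rfl
    exact h hz

lemma exists_bump {X : Type*} [MetricSpace X] (L : Set X) (x y : ℕ → X)
    (hxy : ∀ n, 0 < dist (y n) (x n))
    (hdis : ∀ m n, m ≠ n → dist (y m) (x m) + dist (y n) (x n) < dist (x m) (x n)) :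
    ∃ h : X → ℝ, DeltaUC L h ∧ (∀ n : ℕ, 1 / ((n : ℝ) + 1) ≤ h (x n)) ∧ ∀ n, h (y n) = 0 := by
  set r : ℕ → ℝ := fun n => dist (y n) (x n) with hr
  let b : ℕ → X → ℝ := fun n p => max 0 ((1 - dist p (x n) / r n) / ((n : ℝ) + 1))
  have hb0 : ∀ n p, 0 ≤ b n p := fun n p => le_max_left _ _
  have hb1 : ∀ n p, b n p ≤ 1 / ((n : ℝ) + 1) := by
    intro n p
    refine max_le (by positivity) ?_
    gcongr
    have : 0 ≤ dist p (x n) / r n := div_nonneg dist_nonneg (hxy n).le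
    linarith
  have hbdd : ∀ p, BddAbove (Set.range fun n => b n p) := by
    intro p
    refine ⟨1, ?_⟩
    rintro _ ⟨n, rfl⟩
    refine (hb1 n p).trans ?_
    rw [div_le_one (by positivity)]
    have : (0 : ℝ) ≤ n := n.cast_nonneg
    linarith
  have hc : ∀ N : ℕ, ∃ c > 0, ∀ n < N, c ≤ r n := by
    intro N
    induction N with
    | zero => exact ⟨1, one_pos, by simp⟩
    | succ N ih =>
      obtain ⟨c, hc, h⟩ := ih
      refine ⟨min c (r N), lt_min hc (hxy N), fun n hn => ?_⟩
      rcases Nat.lt_succ_iff_lt_or_eq.1 hn with h' | rfl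
      · exact (min_le_left _ _).trans (h n h')
      · exact min_le_right _ _
  refine ⟨fun p => ⨆ n, b n p, ?_, ?_, ?_⟩
  · intro ε hε
    obtain ⟨N, hN⟩ := exists_nat_one_div_lt (half_pos hε)
    obtain ⟨c, hc0, hcN⟩ := hc N
    have key : ∀ p q, dist p q < c * (ε / 2) → (⨆ n, b n p) ≤ (⨆ n, b n q) + ε / 2 := by
      intro p q hpq
      refine ciSup_le fun n => ?_
      refine le_trans ?_ (add_le_add_left (le_ciSup (hbdd q) n) _)
      rcases lt_or_ge n N with hn | hn
      · refine max_le (add_nonneg (hb0 _ _) (half_pos hε).le) ?_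
        have h1 : (1 - dist q (x n) / r n) / ((n : ℝ) + 1) ≤ b n q := le_max_right _ _
        have h2 : (1 - dist p (x n) / r n) / ((n : ℝ) + 1)
            - (1 - dist q (x n) / r n) / ((n : ℝ) + 1) ≤ ε / 2 := by
          have hrn : 0 < r n := hxy n
          have e : (1 - dist p (x n) / r n) / ((n : ℝ) + 1)
            - (1 - dist q (x n) / r n) / ((n : ℝ) + 1)
              = (dist q (x n) - dist p (x n)) / (r n * ((n : ℝ) + 1)) := by
            field_simp
            ring
          rw [e, div_le_iff₀ (by positivity)]
          have h3 : dist q (x n) - dist p (x n) ≤ dist p q := by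
            have := dist_triangle q p (x n)
            rw [dist_comm q p] at this
            linarith
          have h4 : c ≤ r n * ((n : ℝ) + 1) := by
            have := hcN n hn
            have : 0 ≤ r n * n := by positivity
            linarith
          nlinarith
        linarith
      · have h1 := hb1 n p
        have h2 := hb0 n q
        have h3 : 1 / ((n : ℝ) + 1) ≤ 1 / ((N : ℝ) + 1) := by
          gcongr
        linarith
    refine ⟨c * (ε / 2), by positivity, fun p q hpq => ?_⟩
    have hd := (dist_le_deltaL L p q).trans_lt hpq
    have k1 := key p q hd
    have k2 := key q p (by rwa [dist_comm])
    rw [abs_lt]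
    constructor <;> linarith
  · intro n
    refine le_trans ?_ (le_ciSup (hbdd (x n)) n)
    simp [b]
  · intro n
    have : ∀ m, b m (y n) = 0 := by
      intro m
      apply max_eq_left
      apply div_nonpos_of_nonpos_of_nonneg _ (by positivity)
      rw [sub_nonpos, one_le_div (hxy m)]
      by_cases hmn : m = n
      · rw [hmn]
      · have h1 := hdis m n hmn
        have h2 := dist_triangle (x m) (y n) (x n)
        rw [dist_comm (x m) (y n)] at h2
        change dist (y m) (x m) ≤ _
        linarith [dist_comm (y n) (x m)]
    simp [this]

theorem stmt19 {X : Type*} [MetricSpace X] (hX' : (limitPoints X).Nonempty) :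
    (∀ f g : X → ℝ, DeltaUC (limitPoints X) f → DeltaUC (limitPoints X) g →
        DeltaUC (limitPoints X) (fun x => f x * g x)) ↔
      (∀ g : (limitPoints X) → ℝ, UniformContinuous g → ∃ M : ℝ, ∀ x, |g x| ≤ M) := by
  constructor
  · intro hprod g hg
    by_contra! hunb
    obtain ⟨G, hG, hGg⟩ := exists_ext _ hX' (limitPoints_closed X) g hg
    choose p hp using fun k : ℕ => hunb k
    let x : ℕ → limitPoints X := fun n =>
      Nat.rec (p 1) (fun _ z => p (⌈|g z|⌉₊ + 1)) n
    have hx0 : 1 < |g (x 0)| := by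
      have := hp 1
      rw [Nat.cast_one] at this
      exact this
    have hxs : ∀ n, |g (x n)| + 1 < |g (x (n + 1))| := by
      intro n
      have h1 := hp (⌈|g (x n)|⌉₊ + 1)
      have h2 := Nat.le_ceil (|g (x n)|)
      push_cast at h1
      have h3 : x (n + 1) = p (⌈|g (x n)|⌉₊ + 1) := rfl
      rw [h3]
      linarith
    clear_value x
    have hmono : Monotone fun n : ℕ => |g (x n)| - n := by
      apply monotone_nat_of_le_succ
      intro n
      have := hxs n
      push_cast
      linarith
    have hge : ∀ n : ℕ, (n : ℝ) + 1 ≤ |g (x n)| := by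
      intro n
      have := hmono (Nat.zero_le n)
      simp only [Nat.cast_zero] at this
      linarith
    have hsep' : ∀ m n : ℕ, m < n → 1 ≤ |g (x m) - g (x n)| := by
      intro m n hmn
      have h1 := hmono hmn.le
      simp only at h1
      have h2 : (m : ℝ) + 1 ≤ n := by exact_mod_cast hmn
      have h3 := abs_sub_abs_le_abs_sub (g (x n)) (g (x m))
      rw [abs_sub_comm]
      linarith
    have hsep : ∀ m n : ℕ, m ≠ n → 1 ≤ |g (x m) - g (x n)| := by
      intro m n hmn
      rcases lt_or_gt_of_ne hmn with h | h
      · exact hsep' m n h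
      · rw [abs_sub_comm]; exact hsep' n m h
    obtain ⟨η, hη, H⟩ := Metric.uniformContinuous_iff.1 hg 1 one_pos
    have hy : ∀ n : ℕ, ∃ y : X, y ≠ (x n).1 ∧ dist y (x n).1 < min (η / 2) (1 / ((n : ℝ) + 1)) := by
      intro n
      obtain ⟨y, hy, hd⟩ := Metric.mem_closure_iff.1 (x n).2
        (min (η / 2) (1 / ((n : ℝ) + 1))) (by positivity)
      exact ⟨y, hy, by rwa [dist_comm]⟩
    choose y hyne hyd using hy
    obtain ⟨h, hh, hhx, hhy⟩ := exists_bump (limitPoints X) (fun n => (x n).1) y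
      (fun n => dist_pos.2 (hyne n)) (by
        intro m n hmn
        have h1 := (hyd m).trans_le (min_le_left _ _)
        have h2 := (hyd n).trans_le (min_le_left _ _)
        have h3 : η ≤ dist (x m : X) (x n) := by
          by_contra! hlt
          have := H (a := x m) (b := x n) hlt
          rw [Real.dist_eq] at this
          linarith [hsep m n hmn]
        linarith)
    obtain ⟨ζ, hζ, K⟩ := hprod G h hG hh 1 one_pos
    obtain ⟨n, hn⟩ := exists_nat_one_div_lt (half_pos hζ)
    have h1 := K (y n) (x n) (by
      have := deltaL_le_two _ (y n) (x n) (x n).2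
      have h2 := (hyd n).trans_le (min_le_right _ _)
      linarith)
    simp only [hhy, mul_zero, zero_sub, abs_neg, hGg, abs_mul] at h1
    have h2 := (hhx n).trans (le_abs_self _)
    have h3 := mul_le_mul (hge n) h2 (by positivity) (abs_nonneg _)
    rw [mul_one_div_cancel (by positivity)] at h3
    linarith
  · intro hb f g hf hg ε hε
    obtain ⟨M, hM, a, ha, hfM⟩ := hf.bdd_near hX' hb
    obtain ⟨N, hN, b, hb', hgN⟩ := hg.bdd_near hX' hb
    obtain ⟨c, hc, hfc⟩ := hf (ε / (2 * N)) (by positivity)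
    obtain ⟨e, he, hge⟩ := hg (ε / (2 * M)) (by positivity)
    refine ⟨min (min a b) (min c e), by positivity, fun x y hxy => ?_⟩
    by_cases h : x = y
    · simp [h, hε]
    obtain ⟨⟨ha', hb''⟩, hc', he'⟩ : (_ ∧ _) ∧ _ ∧ _ := by simpa only [lt_min_iff] using hxy
    obtain ⟨h1, h2⟩ := infDist_le_deltaL (limitPoints X) x y h
    have k1 := hfM x (h1.trans_lt ha')
    have k2 := hgN y (h2.trans_lt hb'')
    have k3 := hfc x y hc'
    have k4 := hge x y he'
    have e1 : f x * g x - f y * g y = f x * (g x - g y) + (f x - f y) * g y := by ring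
    simp only
    rw [e1]
    calc _ ≤ |f x| * |g x - g y| + |f x - f y| * |g y| := by
          rw [← abs_mul, ← abs_mul]; exact abs_add_le _ _
      _ ≤ M * |g x - g y| + |f x - f y| * N := by gcongr
      _ < M * (ε / (2 * M)) + (ε / (2 * N)) * N := by gcongr
      _ = ε := by field_simp; ring
end
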